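/- The iterated improper integral I₃ = ∫_{-∞}^{∞} ds₁ ∫_{-∞}^{s₁} ds₂ ⋯ ∫_{-∞}^{s₅} ds₆ cos(s₁² − s₂²)·cos(s₃² − s₄²)·cos(s₅² − s₆²) converges and equals (2/3!)·(π/4)³ = π³/192. -/

import Mathlib

open Real MeasureTheory Filter Topology intervalIntegral

/-
Let `cₙ(T)` be the nested integral over `[-T, T]` with `n` cosine factors. Its generating function
`∑ (-4λ)ⁿ cₙ(T)` is a Neumann series, summing to the population inversion of a two-level system
with linearly chirped couplings `exp (± i s²)`, i.e. of the Landau–Zener problem. That system is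
solved by Kummer's confluent hypergeometric functions, so the inversion is `2 (1 - P)² - 1` with
`P` explicit. Writing `λ = -4 i w` and rotating the contour in Kummer's integral gives
`P → 1 - exp (2 π i w)` as `T → ∞`, boundedly on small circles, so the inversion tends to
`2 exp (4 π i w) - 1` and Cauchy's formula gives convergence of every coefficient:
`cₙ(T) → (2 / n!) (π / 4)ⁿ` for `n ≥ 1`.
-/

section PowerSeriesOnCircle

variable {R : ℝ} {c : ℕ → ℂ} {F : ℂ → ℂ}

lemma circleIntegral_pow_mul_inv_pow (hR : 0 < R) (m n : ℕ) :
    ∮ z in C(0, R), z ^ m * (z ^ (n + 1))⁻¹ = if m = n then 2 * π * Complex.I else 0 := by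
  have hzpow : Set.EqOn (fun z : ℂ ↦ z ^ m * (z ^ (n + 1))⁻¹)
      (fun z ↦ (z - 0) ^ (m - n - 1 : ℤ)) (Metric.sphere 0 R) := by
    intro z hz
    have hz0 : z ≠ 0 := ne_zero_of_mem_sphere hR.ne' ⟨z, hz⟩
    simp only [sub_zero, sub_sub, zpow_sub₀ hz0, zpow_natCast, div_eq_mul_inv]
    norm_cast
  rw [circleIntegral.integral_congr hR.le hzpow]
  split_ifs with hmn
  · simpa [hmn] using circleIntegral.integral_sub_center_inv (0 : ℂ) hR.ne'
  · exact circleIntegral.integral_sub_zpow_of_ne (by lia) 0 0 R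

lemma hasSum_circleMap (hR : 0 < R)
    (hF : ∀ z ∈ Metric.sphere 0 R, HasSum (fun n ↦ c n * z ^ n) (F z)) (θ : ℝ) :
    HasSum (fun n ↦ c n * circleMap 0 R θ ^ n) (F (circleMap 0 R θ)) :=
  hF _ (circleMap_mem_sphere 0 hR.le θ)

lemma continuous_comp_circleMap_of_hasSum (hR : 0 < R)
    (hF : ∀ z ∈ Metric.sphere 0 R, HasSum (fun n ↦ c n * z ^ n) (F z)) :
    Continuous fun θ ↦ F (circleMap 0 R θ) := by
  have hsum := hasSum_circleMap hR hF
  simp only [← (hsum _).tsum_eq]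
  refine continuous_tsum (fun n ↦ by fun_prop) (hsum 0).summable.norm fun n θ ↦ ?_
  simp

lemma circleIntegral_mul_inv_pow_of_hasSum (hR : 0 < R)
    (hF : ∀ z ∈ Metric.sphere 0 R, HasSum (fun n ↦ c n * z ^ n) (F z)) (n : ℕ) :
    ∮ z in C(0, R), F z * (z ^ (n + 1))⁻¹ = 2 * π * Complex.I * c n := by
  have hterm (m : ℕ) : ∮ z in C(0, R), c m * z ^ m * (z ^ (n + 1))⁻¹ =
      if m = n then 2 * π * Complex.I * c n else 0 := by
    simp_rw [mul_assoc (c m), circleIntegral.integral_const_mul,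
      circleIntegral_pow_mul_inv_pow hR, mul_ite, mul_zero]
    grind
  have hsum := hasSum_circleMap hR hF
  have hswap : HasSum (fun m ↦ ∮ z in C(0, R), c m * z ^ m * (z ^ (n + 1))⁻¹)
      (∮ z in C(0, R), F z * (z ^ (n + 1))⁻¹) := by
    refine hasSum_integral_of_dominated_convergence
      (fun m _ ↦ R * (‖c m * circleMap 0 R 0 ^ m‖ * (R ^ (n + 1))⁻¹)) (fun m ↦ ?_)
      (fun m ↦ ae_of_all _ fun θ _ ↦ ?_)
      (ae_of_all _ fun θ _ ↦ ((hsum 0).summable.norm.mul_right _).mul_left _)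
      intervalIntegrable_const (ae_of_all _ fun θ _ ↦ ((hsum θ).mul_right _).const_smul _)
    · simp only [deriv_circleMap]
      exact (by fun_prop : Measurable _).aestronglyMeasurable
    · simp [abs_of_pos hR]
  simp only [hterm] at hswap
  exact hswap.unique (hasSum_ite_eq n _)

theorem tendsto_coeff_of_hasSum_of_tendsto_of_bounded {ι : Type*} {l : Filter ι}
    [l.IsCountablyGenerated] {c : ι → ℕ → ℂ} {F : ι → ℂ → ℂ} {c₀ : ℕ → ℂ} {f : ℂ → ℂ} {B : ℝ}
    (hR : 0 < R)
    (hF : ∀ᶠ i in l, ∀ z ∈ Metric.sphere 0 R, HasSum (fun n ↦ c i n * z ^ n) (F i z))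
    (hB : ∀ᶠ i in l, ∀ z ∈ Metric.sphere 0 R, ‖F i z‖ ≤ B)
    (hf : ∀ z ∈ Metric.sphere 0 R, HasSum (fun n ↦ c₀ n * z ^ n) (f z))
    (hlim : ∀ z ∈ Metric.sphere 0 R, Tendsto (fun i ↦ F i z) l (𝓝 (f z))) (n : ℕ) :
    Tendsto (fun i ↦ c i n) l (𝓝 (c₀ n)) := by
  have hmem (θ : ℝ) := circleMap_mem_sphere (0 : ℂ) hR.le θ
  have hint : Tendsto (fun i ↦ ∮ z in C(0, R), F i z * (z ^ (n + 1))⁻¹) l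
      (𝓝 (∮ z in C(0, R), f z * (z ^ (n + 1))⁻¹)) := by
    refine tendsto_integral_filter_of_dominated_convergence
      (fun _ ↦ R * (B * (R ^ (n + 1))⁻¹)) ?_ ?_ intervalIntegrable_const
      (ae_of_all _ fun θ _ ↦ ((hlim _ (hmem θ)).mul_const _).const_smul _)
    · filter_upwards [hF] with i hi
      have hFmeas := (continuous_comp_circleMap_of_hasSum hR hi).measurable
      simp only [deriv_circleMap]
      have hcircle := (continuous_circleMap 0 R).measurable
      exact ((hcircle.mul_const _).smul
        (hFmeas.mul (hcircle.pow_const _).inv)).aestronglyMeasurable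
    · filter_upwards [hB] with i hi
      refine ae_of_all _ fun θ _ ↦ ?_
      simpa [abs_of_pos hR, hR] using hi _ (hmem θ)
  rw [circleIntegral_mul_inv_pow_of_hasSum hR hf] at hint
  refine ((hint.const_mul (2 * π * Complex.I)⁻¹).congr' ?_).trans_eq ?_
  · filter_upwards [hF] with i hi
    rw [circleIntegral_mul_inv_pow_of_hasSum hR hi, inv_mul_cancel_left₀ Complex.two_pi_I_ne_zero]
  · rw [inv_mul_cancel_left₀ Complex.two_pi_I_ne_zero]

end PowerSeriesOnCircle

section Volterra

lemma hasSum_pow_apply_of_sub_apply_eq {E : Type*} [AddCommGroup E] [Module ℂ E]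
    (A : Module.End ℂ E) (φ : E →ₗ[ℂ] ℂ) {z f : E} (hz : z - A z = f)
    (hsum : ∀ g, Summable fun n ↦ φ ((A ^ n) g)) : HasSum (fun n ↦ φ ((A ^ n) f)) (φ z) := by
  have hpartial (N : ℕ) : ∑ n ∈ Finset.range N, φ ((A ^ n) f) = φ z - φ ((A ^ N) z) := by
    rw [← map_sum, ← LinearMap.sum_apply, ← map_sub, ← hz]
    exact congrArg φ (LinearMap.congr_fun (geom_sum_mul_neg A N) z)
  rw [(hsum f).hasSum_iff_tendsto_nat]
  simpa [hpartial] using tendsto_const_nhds.sub (hsum z).tendsto_atTop_zero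

variable (k : C(ℝ × ℝ, ℂ)) (a : ℝ)

/-- The Volterra integral operator `g ↦ ∫ y in a..x, k (x, y) * g y` on continuous functions. -/
noncomputable def volterra : Module.End ℂ C(ℝ, ℂ) where
  toFun g := ⟨fun x ↦ ∫ y in a..x, k (x, y) * g y,
    continuous_parametric_intervalIntegral_of_continuous
      (by simp only [Function.uncurry_def]; fun_prop) continuous_id⟩
  map_add' f g := by
    ext x
    simp only [ContinuousMap.coe_mk, ContinuousMap.add_apply, mul_add]
    exact integral_add (by apply Continuous.intervalIntegrable; fun_prop)
      (by apply Continuous.intervalIntegrable; fun_prop)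
  map_smul' c g := by
    ext x
    simp [mul_left_comm]

/-- The operator `g ↦ ∫ x in a..s, ∫ y in a..x, k (x, y) * g y` on continuous functions. -/
noncomputable def integratedVolterra : Module.End ℂ C(ℝ, ℂ) := volterra 1 a * volterra k a

variable {k a}

lemma volterra_apply (g : C(ℝ, ℂ)) (x : ℝ) : volterra k a g x = ∫ y in a..x, k (x, y) * g y := rfl

lemma integratedVolterra_apply (g : C(ℝ, ℂ)) (s : ℝ) :
    integratedVolterra k a g s = ∫ x in a..s, ∫ y in a..x, k (x, y) * g y := by
  simp [integratedVolterra, volterra_apply]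

lemma integral_pow_sub_div_factorial (x : ℝ) (m : ℕ) :
    ∫ y in a..x, (y - a) ^ m / m.factorial = (x - a) ^ (m + 1) / (m + 1).factorial := by
  rw [intervalIntegral.integral_div, integral_comp_sub_right (fun y ↦ y ^ m), integral_pow,
    Nat.factorial_succ]
  push_cast
  field_simp
  simp

lemma norm_volterra_apply_le {b C M : ℝ} {m : ℕ} {g : C(ℝ, ℂ)}
    (hk : ∀ p ∈ Set.Icc a b ×ˢ Set.Icc a b, ‖k p‖ ≤ C)
    (hg : ∀ y ∈ Set.Icc a b, ‖g y‖ ≤ M * ((y - a) ^ m / m.factorial)) :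
    ∀ x ∈ Set.Icc a b, ‖volterra k a g x‖ ≤
      C * M * ((x - a) ^ (m + 1) / (m + 1).factorial) := by
  intro x hx
  rw [← integral_pow_sub_div_factorial, ← intervalIntegral.integral_const_mul]
  refine norm_integral_le_of_norm_le hx.1 (ae_of_all _ fun y hy ↦ ?_)
    (by apply Continuous.intervalIntegrable; fun_prop)
  have hyb : y ∈ Set.Icc a b := ⟨hy.1.le, hy.2.trans hx.2⟩
  rw [norm_mul, mul_assoc]
  have hkxy := hk (x, y) ⟨hx, hyb⟩
  exact mul_le_mul hkxy (hg y hyb) (norm_nonneg _) ((norm_nonneg _).trans hkxy)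

lemma norm_integratedVolterra_pow_apply_le {b C M : ℝ} {g : C(ℝ, ℂ)}
    (hk : ∀ p ∈ Set.Icc a b ×ˢ Set.Icc a b, ‖k p‖ ≤ C) (hg : ∀ y ∈ Set.Icc a b, ‖g y‖ ≤ M)
    (n : ℕ) : ∀ x ∈ Set.Icc a b, ‖(integratedVolterra k a ^ n) g x‖ ≤
      C ^ n * M * ((x - a) ^ (2 * n) / (2 * n).factorial) := by
  induction n with
  | zero => simpa using hg
  | succ n ih =>
    have hstep := norm_volterra_apply_le (k := 1) (C := 1) (by simp) (norm_volterra_apply_le hk ih)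
    intro x hx
    rw [pow_succ', pow_succ', mul_assoc C, ← one_mul (C * _)]
    exact hstep x hx

lemma summable_pow_mul_integratedVolterra_pow_apply (μ : ℂ) (g : C(ℝ, ℂ)) {x : ℝ} (hx : a ≤ x) :
    Summable fun n ↦ μ ^ n * (integratedVolterra k a ^ n) g x := by
  obtain ⟨C, hC⟩ := (isCompact_Icc.prod isCompact_Icc).exists_bound_of_continuousOn
    (f := k) (s := Set.Icc a x ×ˢ Set.Icc a x) (by fun_prop)
  obtain ⟨M, hM⟩ := isCompact_Icc.exists_bound_of_continuousOn
    (f := g) (s := Set.Icc a x) (by fun_prop)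
  have hx' : x ∈ Set.Icc a x := ⟨hx, le_rfl⟩
  have hC0 : 0 ≤ C := (norm_nonneg _).trans (hC (x, x) ⟨hx', hx'⟩)
  have hM0 : 0 ≤ M := (norm_nonneg _).trans (hM _ hx')
  refine .of_norm_bounded
    ((summable_pow_div_factorial (‖μ‖ * C * (x - a) ^ 2)).mul_left M) fun n ↦ ?_
  calc ‖μ ^ n * (integratedVolterra k a ^ n) g x‖
    _ ≤ ‖μ‖ ^ n * (C ^ n * M * ((x - a) ^ (2 * n) / (2 * n).factorial)) := by
      rw [norm_mul, norm_pow]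
      gcongr
      exact norm_integratedVolterra_pow_apply_le hC hM n x hx'
    _ ≤ ‖μ‖ ^ n * (C ^ n * M * ((x - a) ^ (2 * n) / n.factorial)) := by
      have := (even_two_mul n).pow_nonneg (x - a)
      gcongr
      lia
    _ = M * ((‖μ‖ * C * (x - a) ^ 2) ^ n / n.factorial) := by rw [mul_pow, mul_pow, pow_mul]; ring

theorem hasSum_integratedVolterra_of_add_smul_eq {μ : ℂ} {z f : C(ℝ, ℂ)}
    (hz : z + μ • integratedVolterra k a z = f) {x : ℝ} (hx : a ≤ x) :
    HasSum (fun n ↦ (-μ) ^ n * (integratedVolterra k a ^ n) f x) (z x) := by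
  have heval (n : ℕ) (g : C(ℝ, ℂ)) :
      (((-μ) • integratedVolterra k a) ^ n) g x = (-μ) ^ n * (integratedVolterra k a ^ n) g x := by
    rw [smul_pow]; rfl
  have hneumann := hasSum_pow_apply_of_sub_apply_eq ((-μ) • integratedVolterra k a)
    (ContinuousMap.evalCLM ℂ x : C(ℝ, ℂ) →L[ℂ] ℂ).toLinearMap (by simpa using hz) fun g ↦ by
      simpa [heval] using summable_pow_mul_integratedVolterra_pow_apply (-μ) g hx
  simpa [heval] using hneumann

end Volterra

section NestedCosIntegral

/-- The nested integral
`∫_{-T}^s ds₁ ∫_{-T}^{s₁} ds₂ ⋯ ∫_{-T}^{s₂ₙ₋₁} ds₂ₙ ∏ⱼ cos (s₂ⱼ₋₁ ^ 2 - s₂ⱼ ^ 2)`,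
with `n` factors, as a function of its outermost endpoint `s`. -/
noncomputable def nestedCosIntegral (T : ℝ) : ℕ → ℝ → ℝ
  | 0, _ => 1
  | n + 1, s => ∫ x in (-T)..s, ∫ y in (-T)..x, cos (x ^ 2 - y ^ 2) * nestedCosIntegral T n y

/-- The kernel `cos (x ^ 2 - y ^ 2)`. -/
noncomputable def cosKernel : C(ℝ × ℝ, ℂ) := ⟨fun p ↦ cos (p.1 ^ 2 - p.2 ^ 2), by fun_prop⟩

lemma cosKernel_apply (x y : ℝ) : cosKernel (x, y) = cos (x ^ 2 - y ^ 2) := rfl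

lemma integratedVolterra_cosKernel_pow_one (T : ℝ) (n : ℕ) (s : ℝ) :
    (integratedVolterra cosKernel (-T) ^ n) 1 s = nestedCosIntegral T n s := by
  induction n generalizing s with
  | zero => simp [nestedCosIntegral]
  | succ n ih =>
    rw [pow_succ', Module.End.mul_apply, integratedVolterra_apply]
    simp only [cosKernel_apply, ih, nestedCosIntegral, ← Complex.ofReal_mul,
      intervalIntegral.integral_ofReal]

end NestedCosIntegral

section TwoLevelSystem

/-- `(a, b)` are the amplitudes of a two-level system with couplings `p`, `q` and strength `lam`,
that is, a solution of `a' = -lam * p * b`, `b' = q * a`. -/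
structure IsTwoLevelSolution (lam : ℂ) (p q a b : ℝ → ℂ) : Prop where
  hasDerivAt_fst : ∀ s, HasDerivAt a (-lam * (p s * b s)) s
  hasDerivAt_snd : ∀ s, HasDerivAt b (q s * a s) s

/-- The population inversion of a pair of solutions with interchanged couplings. -/
def inversion (lam : ℂ) (a b a' b' : ℝ → ℂ) (s : ℝ) : ℂ := a s * a' s - lam * (b s * b' s)

namespace IsTwoLevelSolution

variable {lam : ℂ} {p q a b a' b' : ℝ → ℂ}

lemma continuous_fst (h : IsTwoLevelSolution lam p q a b) : Continuous a :=
  continuous_iff_continuousAt.2 fun s ↦ (h.hasDerivAt_fst s).continuousAt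

lemma continuous_snd (h : IsTwoLevelSolution lam p q a b) : Continuous b :=
  continuous_iff_continuousAt.2 fun s ↦ (h.hasDerivAt_snd s).continuousAt

lemma continuous_inversion (h : IsTwoLevelSolution lam p q a b)
    (h' : IsTwoLevelSolution lam q p a' b') : Continuous (inversion lam a b a' b') := by
  have := h.continuous_fst
  have := h.continuous_snd
  have := h'.continuous_fst
  have := h'.continuous_snd
  unfold inversion
  fun_prop

lemma rotate (h : IsTwoLevelSolution lam p q a b) (h' : IsTwoLevelSolution lam q p a' b')
    (α β : ℂ) : IsTwoLevelSolution lam p q (fun s ↦ α * a s - lam * (β * b' s))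
      (fun s ↦ α * b s + β * a' s) where
  hasDerivAt_fst s := (((h.hasDerivAt_fst s).const_mul α).sub
    (((h'.hasDerivAt_snd s).const_mul β).const_mul lam)).congr_deriv (by ring)
  hasDerivAt_snd s := (((h.hasDerivAt_snd s).const_mul α).add
    ((h'.hasDerivAt_fst s).const_mul β)).congr_deriv (by ring)

lemma conservation (h : IsTwoLevelSolution lam p q a b) (h' : IsTwoLevelSolution lam q p a' b')
    (s t : ℝ) : a s * a' s + lam * (b s * b' s) = a t * a' t + lam * (b t * b' t) := by
  have hderiv (s : ℝ) : HasDerivAt (fun s ↦ a s * a' s + lam * (b s * b' s)) 0 s :=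
    (((h.hasDerivAt_fst s).mul (h'.hasDerivAt_fst s)).add
      (((h.hasDerivAt_snd s).mul (h'.hasDerivAt_snd s)).const_mul lam)).congr_deriv (by ring)
  exact is_const_of_deriv_eq_zero (fun s ↦ (hderiv s).differentiableAt)
    (fun s ↦ (hderiv s).deriv) s t

lemma integral_coupling_mul_inversion (hq : Continuous q) (h : IsTwoLevelSolution lam p q a b)
    (h' : IsTwoLevelSolution lam q p a' b') {t₀ : ℝ} (hb : b t₀ = 0) (x : ℝ) :
    ∫ y in t₀..x, q y * inversion lam a b a' b' y = b x * a' x := by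
  have hderiv (s : ℝ) : HasDerivAt (fun s ↦ b s * a' s) (q s * inversion lam a b a' b' s) s :=
    ((h.hasDerivAt_snd s).mul (h'.hasDerivAt_fst s)).congr_deriv (by unfold inversion; ring)
  rw [integral_eq_sub_of_hasDerivAt (fun s _ ↦ hderiv s)
    ((hq.mul (h.continuous_inversion h')).intervalIntegrable _ _), hb, zero_mul, sub_zero]

lemma hasDerivAt_inversion (h : IsTwoLevelSolution lam p q a b)
    (h' : IsTwoLevelSolution lam q p a' b') (s : ℝ) : HasDerivAt (inversion lam a b a' b')
      (-(4 * lam) * ((p s * (b s * a' s) + q s * (b' s * a s)) / 2)) s :=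
  (((h.hasDerivAt_fst s).mul (h'.hasDerivAt_fst s)).sub
    (((h.hasDerivAt_snd s).mul (h'.hasDerivAt_snd s)).const_mul lam)).congr_deriv (by ring)

variable {k : C(ℝ × ℝ, ℂ)}

lemma inversion_add_smul_integratedVolterra (hp : Continuous p) (hq : Continuous q)
    (hk : ∀ x y, k (x, y) = (p x * q y + q x * p y) / 2) (h : IsTwoLevelSolution lam p q a b)
    (h' : IsTwoLevelSolution lam q p a' b') {t₀ : ℝ} (ha : a t₀ = 1) (hb : b t₀ = 0)
    (ha' : a' t₀ = 1) (hb' : b' t₀ = 0) {z : C(ℝ, ℂ)} (hz : ⇑z = inversion lam a b a' b') :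
    z + (4 * lam) • integratedVolterra k t₀ z = 1 := by
  have hz' : ⇑z = inversion lam a' b' a b := by
    rw [hz]; funext s; simp only [inversion, mul_comm]
  have hinner (x : ℝ) :
      volterra k t₀ z x = (p x * (b x * a' x) + q x * (b' x * a x)) / 2 := by
    rw [volterra_apply, ← h.integral_coupling_mul_inversion hq h' hb, ← hz,
      ← h'.integral_coupling_mul_inversion hp h hb', ← hz', ← intervalIntegral.integral_const_mul,
      ← intervalIntegral.integral_const_mul, ← intervalIntegral.integral_add
        (by apply Continuous.intervalIntegrable; fun_prop)
        (by apply Continuous.intervalIntegrable; fun_prop), ← intervalIntegral.integral_div]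
    congr! 2
    rw [hk]
    ring
  have hderiv (x : ℝ) : HasDerivAt z (-(4 * lam) * volterra k t₀ z x) x := by
    rw [hinner, hz]
    exact h.hasDerivAt_inversion h' x
  ext s
  have hftc := integral_eq_sub_of_hasDerivAt (a := t₀) (b := s) (fun x _ ↦ hderiv x)
    (by apply Continuous.intervalIntegrable; fun_prop)
  have hz₀ : z t₀ = 1 := by simp [hz, inversion, ha, ha', hb]
  rw [intervalIntegral.integral_const_mul, hz₀] at hftc
  simp only [volterra_apply, ← integratedVolterra_apply] at hftc
  simp only [ContinuousMap.add_apply, ContinuousMap.smul_apply, smul_eq_mul,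
    ContinuousMap.one_apply]
  linear_combination -hftc

/-- The solutions normalised at `0` are transported to solutions normalised at `-T`
using parity and the conservation law. -/
theorem hasSum_integratedVolterra_of_parity (hp : Continuous p) (hq : Continuous q)
    (hk : ∀ x y, k (x, y) = (p x * q y + q x * p y) / 2) (h : IsTwoLevelSolution lam p q a b)
    (h' : IsTwoLevelSolution lam q p a' b') (ha : a 0 = 1) (ha' : a' 0 = 1)
    (hae : a.Even) (hbo : b.Odd) (hae' : a'.Even) (hbo' : b'.Odd) {T : ℝ} (hT : 0 ≤ T) :
    HasSum (fun n ↦ (-(4 * lam)) ^ n * (integratedVolterra k (-T) ^ n) 1 T)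
      (2 * (1 - 2 * lam * (b T * b' T)) ^ 2 - 1) := by
  have hconserved : a T * a' T + lam * (b T * b' T) = 1 := by
    simpa [ha, ha', hbo.map_zero] using h.conservation h' T 0
  have hS := h.rotate h' (a' T) (b T)
  have hS' := h'.rotate h (a T) (b' T)
  have hz := hS.inversion_add_smul_integratedVolterra hp hq hk hS' (t₀ := -T)
    (by simp only [hae T, hbo' T]; linear_combination hconserved)
    (by simp only [hae' T, hbo T]; ring)
    (by simp only [hae' T, hbo T]; linear_combination hconserved)
    (by simp only [hae T, hbo' T]; ring) (z := ⟨_, hS.continuous_inversion hS'⟩) rfl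
  convert hasSum_integratedVolterra_of_add_smul_eq hz (neg_le_self hT) using 1
  simp only [ContinuousMap.coe_mk, inversion]
  linear_combination -(a T * a' T + 1 - 7 * lam * (b T * b' T)) * hconserved

end IsTwoLevelSolution

end TwoLevelSystem

section KummerIntegral

/-- The integrand of Kummer's integral, on the complex plane. -/
noncomputable def kummerIntegrand (u v z t : ℂ) : ℂ :=
  Complex.exp (-(z * t)) * (t ^ (u - 1) * (1 - t) ^ (v - 1))

/-- Kummer's integral, which equals `B(u, v) * ₁F₁(u; u + v; -z)`. -/
noncomputable def kummerIntegral (u v z : ℂ) : ℂ := ∫ t in (0 : ℝ)..1, kummerIntegrand u v z t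

variable {u v : ℂ}

lemma ne_zero_of_re_pos (hu : 0 < u.re) : u ≠ 0 := fun h ↦ by simp [h] at hu

lemma mul_kummerIntegrand (hu : u ≠ 0) (z t : ℂ) :
    t * kummerIntegrand u v z t = kummerIntegrand (u + 1) v z t := by
  have hpow : t * t ^ (u - 1) = t ^ u := by
    rcases eq_or_ne t 0 with rfl | ht
    · simp [hu]
    · rw [Complex.cpow_sub _ _ ht, Complex.cpow_one, mul_div_cancel₀ _ ht]
  unfold kummerIntegrand
  rw [add_sub_cancel_right, ← hpow]
  ring

lemma kummerIntegrand_one_sub (z t : ℂ) :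
    kummerIntegrand u v z (1 - t) = Complex.exp (-z) * kummerIntegrand v u (-z) t := by
  unfold kummerIntegrand
  rw [sub_sub_cancel, ← mul_assoc (Complex.exp (-z)), ← Complex.exp_add,
    mul_comm (t ^ (v - 1))]
  ring_nf

lemma one_sub_mul_kummerIntegrand (hv : v ≠ 0) (z t : ℂ) :
    (1 - t) * kummerIntegrand u v z t = kummerIntegrand u (v + 1) z t := by
  obtain ⟨s, rfl⟩ : ∃ s, t = 1 - s := ⟨1 - t, by ring⟩
  rw [kummerIntegrand_one_sub, kummerIntegrand_one_sub, ← mul_kummerIntegrand hv]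
  ring

lemma intervalIntegrable_kummerIntegrand (hu : 0 < u.re) (hv : 0 < v.re) (z : ℂ) :
    IntervalIntegrable (fun t : ℝ ↦ kummerIntegrand u v z t) volume 0 1 :=
  (Complex.betaIntegral_convergent hu hv).continuousOn_mul (by fun_prop)

lemma kummerIntegral_zero : kummerIntegral u v 0 = Complex.betaIntegral u v := by
  simp [kummerIntegral, kummerIntegrand, Complex.betaIntegral]

lemma kummerIntegral_reflect (z : ℂ) :
    kummerIntegral u v z = Complex.exp (-z) * kummerIntegral v u (-z) := by
  have hsubst := integral_comp_sub_left (fun t : ℝ ↦ kummerIntegrand u v z t) (a := 0) (b := 1) 1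
  simp only [sub_self, sub_zero, Complex.ofReal_sub, Complex.ofReal_one,
    kummerIntegrand_one_sub, intervalIntegral.integral_const_mul] at hsubst
  exact hsubst.symm

lemma kummerIntegral_sub_left_succ (hu : 0 < u.re) (hv : 0 < v.re) (z : ℂ) :
    kummerIntegral u v z - kummerIntegral (u + 1) v z = kummerIntegral u (v + 1) z := by
  have hu' : 0 < (u + 1).re := by simp; linarith
  unfold kummerIntegral
  rw [← integral_sub (intervalIntegrable_kummerIntegrand hu hv z)
    (intervalIntegrable_kummerIntegrand hu' hv z)]
  congr! 2 with t
  rw [← mul_kummerIntegrand (ne_zero_of_re_pos hu),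
    ← one_sub_mul_kummerIntegrand (ne_zero_of_re_pos hv)]
  ring

lemma norm_exp_neg_mul_le {z w t : ℂ} (hz : z ∈ Metric.ball w 1) (ht : ‖t‖ ≤ 1) :
    ‖Complex.exp (-(z * t))‖ ≤ exp (‖w‖ + 1) := by
  have hzw : ‖z‖ ≤ ‖w‖ + 1 := by
    have := norm_le_norm_add_norm_sub' z w
    rw [mem_ball_iff_norm] at hz
    linarith
  refine (Complex.norm_exp_le_exp_norm _).trans (exp_le_exp.2 ?_)
  rw [norm_neg, norm_mul]
  nlinarith [norm_nonneg z, norm_nonneg t]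

lemma hasDerivAt_kummerIntegral (hu : 0 < u.re) (hv : 0 < v.re) (z : ℂ) :
    HasDerivAt (kummerIntegral u v) (-kummerIntegral (u + 1) v z) z := by
  have hu' : 0 < (u + 1).re := by simp; linarith
  have hmeas {u : ℂ} (hu : 0 < u.re) (w : ℂ) : AEStronglyMeasurable
      (fun t : ℝ ↦ kummerIntegrand u v w t) (volume.restrict (Set.uIoc 0 1)) :=
    (intervalIntegrable_kummerIntegrand hu hv w).def'.aestronglyMeasurable
  rw [kummerIntegral, ← intervalIntegral.integral_neg]
  refine (hasDerivAt_integral_of_dominated_loc_of_deriv_le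
    (F' := fun w t ↦ -kummerIntegrand (u + 1) v w t) (Metric.ball_mem_nhds z one_pos)
    (.of_forall fun w ↦ hmeas hu w) (intervalIntegrable_kummerIntegrand hu hv z)
    (hmeas hu' z).neg (.of_forall fun t ht w hw ↦ ?_)
    ((intervalIntegrable_kummerIntegrand hu' hv 0).norm.const_mul (exp (‖z‖ + 1)))
    (.of_forall fun t _ w _ ↦ ?_)).2
  · rw [Set.uIoc_of_le zero_le_one] at ht
    have hexp := norm_exp_neg_mul_le hw (t := t) (by simpa [abs_of_pos ht.1] using ht.2)
    simp only [kummerIntegrand, norm_neg, norm_mul (Complex.exp _), zero_mul, neg_zero,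
      Complex.exp_zero, one_mul]
    gcongr
  · rw [← mul_kummerIntegrand (ne_zero_of_re_pos hu)]
    unfold kummerIntegrand
    exact (((hasDerivAt_id w).mul_const (t : ℂ)).fun_neg.cexp.mul_const _).congr_deriv
      (by simp; ring)

lemma hasDerivAt_kummerIntegrand_succ_succ (z : ℂ) {t : ℝ} (ht : t ∈ Set.Ioo 0 1) :
    HasDerivAt (fun t : ℝ ↦ kummerIntegrand (u + 1) (v + 1) z t)
      (-z * kummerIntegrand (u + 1) (v + 1) z t + u * kummerIntegrand u (v + 1) z t
        - v * kummerIntegrand (u + 1) v z t) t := by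
  have hexp := ((hasDerivAt_id (t : ℂ)).const_mul z).fun_neg.cexp
  have hpow := (hasDerivAt_id (t : ℂ)).cpow_const (c := u) (.inl (by simpa using ht.1))
  have hpow' := ((hasDerivAt_id (t : ℂ)).const_sub 1).cpow_const (c := v)
    (.inl (by simpa using ht.2))
  simp only [kummerIntegrand, add_sub_cancel_right]
  refine (hexp.mul (hpow.mul hpow')).comp_ofReal.congr_deriv ?_
  simp only [Pi.mul_apply, id_eq]
  ring

lemma continuous_kummerIntegrand_succ_succ (hu : 0 < u.re) (hv : 0 < v.re) (z : ℂ) :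
    Continuous fun t : ℝ ↦ kummerIntegrand (u + 1) (v + 1) z t := by
  have hpow := Complex.continuous_ofReal_cpow_const hu
  have hpow' : Continuous fun t : ℝ ↦ (1 - (t : ℂ)) ^ v := by
    simpa [Function.comp_def] using
      (Complex.continuous_ofReal_cpow_const hv).comp (continuous_sub_left (1 : ℝ))
  simp only [kummerIntegrand, add_sub_cancel_right]
  fun_prop

lemma kummerIntegral_by_parts (hu : 0 < u.re) (hv : 0 < v.re) (z : ℂ) :
    -z * kummerIntegral (u + 1) (v + 1) z + u * kummerIntegral u (v + 1) z
      - v * kummerIntegral (u + 1) v z = 0 := by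
  have hu' : 0 < (u + 1).re := by simp; linarith
  have hv' : 0 < (v + 1).re := by simp; linarith
  have i₁ := (intervalIntegrable_kummerIntegrand hu' hv' z).const_mul (-z)
  have i₂ := (intervalIntegrable_kummerIntegrand hu hv' z).const_mul u
  have i₃ := (intervalIntegrable_kummerIntegrand hu' hv z).const_mul v
  have hftc := integral_eq_sub_of_hasDerivAt_of_le zero_le_one
    (continuous_kummerIntegrand_succ_succ hu hv z).continuousOn
    (fun t ht ↦ hasDerivAt_kummerIntegrand_succ_succ z ht) ((i₁.add i₂).sub i₃)
  simp only [integral_sub (i₁.add i₂) i₃, integral_add i₁ i₂,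
    intervalIntegral.integral_const_mul] at hftc
  unfold kummerIntegral
  rw [hftc]
  simp [kummerIntegrand, ne_zero_of_re_pos hu, ne_zero_of_re_pos hv]

lemma kummerIntegral_succ_succ_relation (hu : 0 < u.re) (hv : 0 < v.re) (z : ℂ) :
    u * kummerIntegral u v z - (u + v) * kummerIntegral (u + 1) v z =
      z * (kummerIntegral (u + 1) v z - kummerIntegral (u + 1 + 1) v z) := by
  have hu' : 0 < (u + 1).re := by simp; linarith
  rw [kummerIntegral_sub_left_succ hu' hv]
  linear_combination kummerIntegral_by_parts hu hv z + u * kummerIntegral_sub_left_succ hu hv z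

end KummerIntegral

section Chirp

/-- The linearly chirped coupling `exp (κ s ^ 2)`. -/
noncomputable def chirp (κ : ℂ) (s : ℝ) : ℂ := Complex.exp (κ * s ^ 2)

/-- First amplitude of the two-level system with chirped couplings, normalised at `0`;
it is `chirp κ` times the derivative of `chirpSnd κ u v`. -/
noncomputable def chirpFst (κ u v : ℂ) (s : ℝ) : ℂ :=
  chirp κ s * ((kummerIntegral u v (κ * s ^ 2) -
    2 * κ * s ^ 2 * kummerIntegral (u + 1) v (κ * s ^ 2)) / Complex.betaIntegral u v)

/-- Second amplitude of the two-level system with chirped couplings, normalised at `0`. -/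
noncomputable def chirpSnd (κ u v : ℂ) (s : ℝ) : ℂ :=
  s * kummerIntegral u v (κ * s ^ 2) / Complex.betaIntegral u v

variable {κ u v : ℂ}

lemma continuous_chirp : Continuous (chirp κ) := by unfold chirp; fun_prop

lemma chirp_neg_mul_chirp (s : ℝ) : chirp (-κ) s * chirp κ s = 1 := by
  rw [chirp, chirp, ← Complex.exp_add, neg_mul, neg_add_cancel, Complex.exp_zero]

lemma cosKernel_eq_chirp (x y : ℝ) : cosKernel (x, y) =
    (chirp Complex.I x * chirp (-Complex.I) y + chirp (-Complex.I) x * chirp Complex.I y) / 2 := by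
  simp only [cosKernel_apply, chirp, ← Complex.exp_add, Complex.ofReal_cos, Complex.cos]
  push_cast
  ring_nf

lemma betaIntegral_ne_zero (hu : 0 < u.re) (hv : 0 < v.re) : Complex.betaIntegral u v ≠ 0 :=
  right_ne_zero_of_mul (Complex.Gamma_mul_Gamma_eq_betaIntegral hu hv ▸
    mul_ne_zero (Complex.Gamma_ne_zero_of_re_pos hu) (Complex.Gamma_ne_zero_of_re_pos hv))

lemma chirpFst_zero (hu : 0 < u.re) (hv : 0 < v.re) : chirpFst κ u v 0 = 1 := by
  simp [chirpFst, chirp, kummerIntegral_zero, betaIntegral_ne_zero hu hv]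

lemma even_chirpFst : (chirpFst κ u v).Even := fun s ↦ by simp [chirpFst, chirp]

lemma odd_chirpSnd : (chirpSnd κ u v).Odd := fun s ↦ by simp [chirpSnd, neg_div]

lemma hasDerivAt_mul_ofReal_sq (s : ℝ) : HasDerivAt (fun s : ℝ ↦ κ * (s : ℂ) ^ 2) (2 * κ * s) s :=
  (((hasDerivAt_id s).ofReal_comp.pow 2).const_mul κ).congr_deriv (by simp; ring)

lemma hasDerivAt_chirp (s : ℝ) : HasDerivAt (chirp κ) (2 * κ * s * chirp κ s) s :=
  (hasDerivAt_mul_ofReal_sq s).cexp.congr_deriv (mul_comm _ _)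

lemma hasDerivAt_kummerIntegral_mul_sq (hu : 0 < u.re) (hv : 0 < v.re) (s : ℝ) :
    HasDerivAt (fun s : ℝ ↦ kummerIntegral u v (κ * s ^ 2))
      (-(2 * κ * s * kummerIntegral (u + 1) v (κ * s ^ 2))) s :=
  ((hasDerivAt_kummerIntegral hu hv _).comp s (hasDerivAt_mul_ofReal_sq s)).congr_deriv (by ring)

theorem isTwoLevelSolution_chirp (hu : 0 < u.re) (hv : 0 < v.re) (huv : u + v = 3 / 2) :
    IsTwoLevelSolution (4 * κ * (u - 1 / 2)) (chirp κ) (chirp (-κ))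
      (chirpFst κ u v) (chirpSnd κ u v) where
  hasDerivAt_fst s := by
    have hu' : 0 < (u + 1).re := by simp; linarith
    refine ((hasDerivAt_chirp s).mul (((hasDerivAt_kummerIntegral_mul_sq hu hv s).sub
      ((hasDerivAt_mul_ofReal_sq s).mul
        (hasDerivAt_kummerIntegral_mul_sq hu' hv s))).div_const
      (Complex.betaIntegral u v))).congr_deriv ?_
    have hrel := kummerIntegral_succ_succ_relation hu hv (κ * s ^ 2)
    rw [huv] at hrel
    simp only [chirpSnd, Pi.sub_apply, Pi.mul_apply]
    linear_combination (4 * κ * s * chirp κ s / Complex.betaIntegral u v) * hrel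
  hasDerivAt_snd s := by
    refine (((hasDerivAt_id s).ofReal_comp.mul
      (hasDerivAt_kummerIntegral_mul_sq hu hv s)).div_const _).congr_deriv ?_
    rw [chirpFst, ← mul_assoc, chirp_neg_mul_chirp]
    simp
    ring

end Chirp

section RayIntegral

lemma norm_cpow_le_rpow_mul_rpow {a ρ : ℝ} {z w : ℂ} (ha : 0 < a)
    (haz : a ≤ ‖z‖) (hzρ : ‖z‖ ≤ ρ) (hρ : 1 ≤ ρ) :
    ‖z ^ w‖ ≤ a ^ min w.re 0 * (exp π * ρ) ^ ‖w‖ := by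
  have hexp : (exp (z.arg * w.im))⁻¹ ≤ exp π ^ ‖w‖ := by
    rw [← exp_neg, ← exp_mul, exp_le_exp]
    have harg : |z.arg * w.im| ≤ π * ‖w‖ := by
      rw [abs_mul]
      gcongr
      exacts [Complex.abs_arg_le_pi z, Complex.abs_im_le_norm w]
    linarith [neg_abs_le (z.arg * w.im)]
  have hnorm : ‖z‖ ^ w.re ≤ a ^ min w.re 0 * ρ ^ ‖w‖ := by
    rcases le_total w.re 0 with hw | hw
    · rw [min_eq_left hw]
      exact (rpow_le_rpow_of_nonpos ha haz hw).trans
        (le_mul_of_one_le_right (by positivity) (one_le_rpow hρ (norm_nonneg w)))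
    · rw [min_eq_right hw, rpow_zero, one_mul]
      exact (rpow_le_rpow (norm_nonneg z) hzρ hw).trans
        (rpow_le_rpow_of_exponent_le hρ (Complex.re_le_norm w))
  calc ‖z ^ w‖ ≤ ‖z‖ ^ w.re / exp (z.arg * w.im) := Complex.norm_cpow_le z w
    _ ≤ a ^ min w.re 0 * ρ ^ ‖w‖ * exp π ^ ‖w‖ := by rw [div_eq_mul_inv]; gcongr
    _ = a ^ min w.re 0 * (exp π * ρ) ^ ‖w‖ := by
      rw [mul_rpow (exp_pos π).le (zero_le_one.trans hρ)]; ring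

lemma rpow_le_rpow_mul_exp_half {x q : ℝ} (hx : 0 ≤ x) (hq : 0 < q) :
    x ^ q ≤ (2 * q) ^ q * exp (x / 2) := by
  have hle : x ≤ 2 * q * exp (x / (2 * q)) := by
    rw [← div_le_iff₀' (by positivity)]
    linarith [add_one_le_exp (x / (2 * q))]
  calc x ^ q ≤ (2 * q * exp (x / (2 * q))) ^ q := by gcongr
    _ = (2 * q) ^ q * exp (x / 2) := by
      rw [mul_rpow (by positivity) (exp_pos _).le, ← exp_mul]
      congr 2
      field_simp

lemma integrableOn_rpow_mul_one_add_rpow_mul_exp_neg {s q : ℝ} (hs : -1 < s) (hq : 0 < q) :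
    IntegrableOn (fun σ : ℝ ↦ σ ^ s * (1 + σ) ^ q * exp (-σ)) (Set.Ioi 0) := by
  refine ((integrableOn_rpow_mul_exp_neg_mul_rpow hs one_pos (half_pos one_pos)).const_mul
    ((2 * q) ^ q * exp (1 / 2))).mono' (Measurable.aestronglyMeasurable (by fun_prop)) ?_
  filter_upwards [ae_restrict_mem measurableSet_Ioi] with σ hσ
  rw [Set.mem_Ioi] at hσ
  have hpow := rpow_le_rpow_mul_exp_half (x := 1 + σ) (by positivity) hq
  rw [norm_of_nonneg (by positivity), rpow_one]
  calc σ ^ s * (1 + σ) ^ q * exp (-σ)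
      ≤ σ ^ s * ((2 * q) ^ q * exp ((1 + σ) / 2)) * exp (-σ) := by gcongr
    _ = (2 * q) ^ q * exp (1 / 2) * (σ ^ s * exp (-(1 / 2) * σ)) := by
      have : exp ((1 + σ) / 2) * exp (-σ) = exp (1 / 2) * exp (-(1 / 2) * σ) := by
        rw [← exp_add, ← exp_add]; ring_nf
      linear_combination (2 * q) ^ q * σ ^ s * this

/-- Kummer's integrand at `z = c⁻¹` along the ray `t = c * σ`, without the factor `c ^ (u - 1)`. -/
noncomputable def rayIntegrand (u v c : ℂ) (σ : ℝ) : ℂ :=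
  Complex.exp (-σ) * ((σ : ℂ) ^ (u - 1) * (1 - c * σ) ^ (v - 1))

/-- Kummer's integral at `z = c⁻¹`, taken along the ray `t = c * σ`, `0 < σ`, instead of the
segment from `0` to `1`, and without the factor `c ^ u`. -/
noncomputable def rayIntegral (u v c : ℂ) : ℂ := ∫ σ in Set.Ioi 0, rayIntegrand u v c σ

variable {u v c : ℂ}

lemma ofReal_mul_cpow {r : ℝ} (hr : 0 < r) {z : ℂ} (hz : z ≠ 0) (w : ℂ) :
    ((r : ℂ) * z) ^ w = (r : ℂ) ^ w * z ^ w := by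
  have hr' : (r : ℂ) ≠ 0 := Complex.ofReal_ne_zero.2 hr.ne'
  rw [Complex.cpow_def_of_ne_zero (mul_ne_zero hr' hz), Complex.cpow_def_of_ne_zero hr',
    Complex.cpow_def_of_ne_zero hz, Complex.log_ofReal_mul hr hz, ← Complex.exp_add,
    Complex.ofReal_log hr.le, add_mul]

lemma kummerIntegrand_inv_mul_ofReal (hc : c ≠ 0) {σ : ℝ} (hσ : 0 < σ) :
    kummerIntegrand u v c⁻¹ (c * σ) = c ^ (u - 1) * rayIntegrand u v c σ := by
  rw [kummerIntegrand, rayIntegrand, inv_mul_cancel_left₀ hc, mul_comm c, ofReal_mul_cpow hσ hc]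
  ring

lemma norm_one_sub_mul_cpow_le (hc : c.re ≤ 0) {R : ℝ} (hv : ‖v‖ ≤ R) (hcR : ‖c‖ ≤ R) {σ : ℝ}
    (hσ : 0 ≤ σ) :
    ‖(1 - c * σ) ^ (v - 1)‖ ≤ (exp π * (1 + R)) ^ (R + 1) * (1 + σ) ^ (R + 1) := by
  have hR : 0 ≤ R := (norm_nonneg v).trans hv
  have hnorm : ‖1 - c * σ‖ ≤ (1 + R) * (1 + σ) := by
    have hmul : ‖c * σ‖ ≤ R * σ := by
      rw [norm_mul, Complex.norm_of_nonneg hσ]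
      gcongr
    have := norm_sub_le (1 : ℂ) (c * σ)
    rw [norm_one] at this
    nlinarith
  have hone : 1 ≤ ‖1 - c * σ‖ := by
    refine le_trans ?_ (Complex.re_le_norm _)
    simpa using mul_nonpos_of_nonpos_of_nonneg hc hσ
  have hv' : ‖v - 1‖ ≤ R + 1 := (norm_sub_le v 1).trans (by simpa using hv)
  have hexp : 1 ≤ exp π := one_le_exp pi_pos.le
  calc ‖(1 - c * σ) ^ (v - 1)‖
      ≤ 1 ^ min (v - 1).re 0 * (exp π * ((1 + R) * (1 + σ))) ^ ‖v - 1‖ :=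
        norm_cpow_le_rpow_mul_rpow one_pos hone hnorm (hone.trans hnorm)
    _ ≤ (exp π * ((1 + R) * (1 + σ))) ^ (R + 1) := by
        rw [one_rpow, one_mul]
        exact rpow_le_rpow_of_exponent_le
          (one_le_mul_of_one_le_of_one_le hexp (hone.trans hnorm)) hv'
    _ = (exp π * (1 + R)) ^ (R + 1) * (1 + σ) ^ (R + 1) := by
        rw [← mul_assoc, mul_rpow (by positivity) (by positivity)]

lemma exists_integrableOn_norm_rayIntegrand_le {δ R : ℝ} (hδ : 0 < δ) (hR : 0 ≤ R) :
    ∃ g : ℝ → ℝ, IntegrableOn g (Set.Ioi 0) ∧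
      ∀ u v c : ℂ, δ ≤ u.re → ‖u‖ ≤ R → ‖v‖ ≤ R → c.re ≤ 0 → ‖c‖ ≤ R →
        ∀ σ ∈ Set.Ioi (0 : ℝ), ‖rayIntegrand u v c σ‖ ≤ g σ := by
  refine ⟨fun σ ↦ (exp π * (1 + R)) ^ (R + 1) * (σ ^ (δ - 1) * (1 + σ) ^ (R + (R + 1)) * exp (-σ)),
    (integrableOn_rpow_mul_one_add_rpow_mul_exp_neg (by linarith) (by linarith)).const_mul _,
    fun u v c hδu hu hv hc hcR σ (hσ : 0 < σ) ↦ ?_⟩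
  have hfst : ‖(σ : ℂ) ^ (u - 1)‖ ≤ σ ^ (δ - 1) * (1 + σ) ^ R := by
    have hsub : u.re - δ ≤ R := by linarith [Complex.re_le_norm u]
    calc ‖(σ : ℂ) ^ (u - 1)‖ = σ ^ (δ - 1) * σ ^ (u.re - δ) := by
          rw [Complex.norm_cpow_eq_rpow_re_of_pos hσ, ← rpow_add hσ]
          simp
      _ ≤ σ ^ (δ - 1) * (1 + σ) ^ (u.re - δ) := by
          have := sub_nonneg.2 hδu
          gcongr
          linarith
      _ ≤ σ ^ (δ - 1) * (1 + σ) ^ R := by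
          gcongr
          linarith
  have hsnd := norm_one_sub_mul_cpow_le hc hv hcR hσ.le
  have hexp : ‖Complex.exp (-σ)‖ = exp (-σ) := by simp [Complex.norm_exp]
  rw [rayIntegrand, norm_mul, norm_mul, hexp]
  calc exp (-σ) * (‖(σ : ℂ) ^ (u - 1)‖ * ‖(1 - c * σ) ^ (v - 1)‖)
      ≤ exp (-σ) * ((σ ^ (δ - 1) * (1 + σ) ^ R) *
          ((exp π * (1 + R)) ^ (R + 1) * (1 + σ) ^ (R + 1))) := by gcongr
    _ = (exp π * (1 + R)) ^ (R + 1) * (σ ^ (δ - 1) * (1 + σ) ^ (R + (R + 1)) * exp (-σ)) := by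
        rw [rpow_add (by positivity : 0 < 1 + σ) R (R + 1)]; ring

lemma aestronglyMeasurable_rayIntegrand :
    AEStronglyMeasurable (rayIntegrand u v c) (volume.restrict (Set.Ioi 0)) := by
  unfold rayIntegrand
  exact Measurable.aestronglyMeasurable (by fun_prop)

lemma integrableOn_rayIntegrand (hu : 0 < u.re) (hc : c.re ≤ 0) :
    IntegrableOn (rayIntegrand u v c) (Set.Ioi 0) := by
  obtain ⟨g, hg, hle⟩ :=
    exists_integrableOn_norm_rayIntegrand_le hu (R := ‖u‖ + ‖v‖ + ‖c‖) (by positivity)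
  refine hg.mono' aestronglyMeasurable_rayIntegrand ?_
  filter_upwards [ae_restrict_mem measurableSet_Ioi] with σ hσ
  refine hle u v c le_rfl ?_ ?_ hc ?_ σ hσ <;>
    linarith [norm_nonneg u, norm_nonneg v, norm_nonneg c]

lemma exists_norm_rayIntegral_le {δ R : ℝ} (hδ : 0 < δ) (hR : 0 ≤ R) :
    ∃ C, ∀ u v c : ℂ, δ ≤ u.re → ‖u‖ ≤ R → ‖v‖ ≤ R → c.re ≤ 0 → ‖c‖ ≤ R →
      ‖rayIntegral u v c‖ ≤ C := by
  obtain ⟨g, hg, hle⟩ := exists_integrableOn_norm_rayIntegrand_le hδ hR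
  refine ⟨∫ σ in Set.Ioi 0, g σ, fun u v c hδu hu hv hc hcR ↦ norm_integral_le_of_norm_le hg ?_⟩
  filter_upwards [ae_restrict_mem measurableSet_Ioi] using hle u v c hδu hu hv hc hcR

lemma tendsto_rayIntegral_zero (hu : 0 < u.re) :
    Tendsto (rayIntegral u v) (𝓝[{c | c.re ≤ 0}] 0) (𝓝 (Complex.Gamma u)) := by
  obtain ⟨g, hg, hle⟩ :=
    exists_integrableOn_norm_rayIntegrand_le hu (R := ‖u‖ + ‖v‖ + 1) (by positivity)
  rw [Complex.Gamma_eq_integral hu, Complex.GammaIntegral]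
  refine tendsto_integral_filter_of_dominated_convergence g
    (.of_forall fun c ↦ aestronglyMeasurable_rayIntegrand) ?_ hg (.of_forall fun σ ↦ ?_)
  · filter_upwards [self_mem_nhdsWithin,
      nhdsWithin_le_nhds (Metric.closedBall_mem_nhds (0 : ℂ) one_pos)] with c hc hc₁
    rw [mem_closedBall_zero_iff] at hc₁
    filter_upwards [ae_restrict_mem measurableSet_Ioi] with σ hσ
    refine hle u v c le_rfl ?_ ?_ hc ?_ σ hσ <;> linarith [norm_nonneg u, norm_nonneg v]
  · have hcont : ContinuousAt (fun c ↦ rayIntegrand u v c σ) 0 := by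
      have hbase : ContinuousAt (fun c : ℂ ↦ (1 - c * σ) ^ (v - 1)) 0 :=
        ContinuousAt.cpow (by fun_prop) (by fun_prop) (by simp)
      unfold rayIntegrand
      fun_prop
    simpa [rayIntegrand] using hcont.tendsto.mono_left nhdsWithin_le_nhds

lemma kummerIntegrand_inv_mul_mul_ofReal {x : ℝ} (hx : 0 < x) (hc : c ≠ 0) {τ : ℝ} (hτ : 0 < τ) :
    kummerIntegrand u v c⁻¹ (x * c * τ) = c ^ (u - 1) * rayIntegrand u v c (x * τ) := by
  rw [← kummerIntegrand_inv_mul_ofReal hc (mul_pos hx hτ)]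
  push_cast
  ring_nf

lemma integrableOn_kummerIntegrand_ray (hu : 0 < u.re) (hc : c.re ≤ 0) (hc₀ : c ≠ 0) {x : ℝ}
    (hx : 0 < x) : IntegrableOn (fun τ : ℝ ↦ kummerIntegrand u v c⁻¹ (x * c * τ)) (Set.Ioi 0) := by
  have hint : IntegrableOn (fun τ ↦ rayIntegrand u v c (x * τ)) (Set.Ioi 0) := by
    rw [integrableOn_Ioi_comp_mul_left_iff _ _ hx, mul_zero]
    exact integrableOn_rayIntegrand hu hc
  exact IntegrableOn.congr_fun (hint.const_mul (c ^ (u - 1)))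
    (fun τ hτ ↦ (kummerIntegrand_inv_mul_mul_ofReal hx hc₀ hτ).symm) measurableSet_Ioi

lemma mul_integral_kummerIntegrand_ray (hc₀ : c ≠ 0) {x : ℝ} (hx : 0 < x) :
    x * c * ∫ τ : ℝ in Set.Ioi 0, kummerIntegrand u v c⁻¹ (x * c * τ) =
      c ^ u * rayIntegral u v c := by
  have hx' : (x : ℂ) ≠ 0 := Complex.ofReal_ne_zero.2 hx.ne'
  rw [setIntegral_congr_fun measurableSet_Ioi fun τ hτ ↦
      kummerIntegrand_inv_mul_mul_ofReal hx hc₀ hτ,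
    MeasureTheory.integral_const_mul, integral_comp_mul_left_Ioi _ _ hx, mul_zero,
    Complex.real_smul, Complex.ofReal_inv, Complex.cpow_sub _ _ hc₀, Complex.cpow_one, rayIntegral]
  field_simp

end RayIntegral

section HalfStrip

lemma tendsto_integral_Ioi_nhdsGT {g : ℝ → ℂ} {a : ℝ} (hg : IntegrableOn g (Set.Ioi a)) :
    Tendsto (fun ε ↦ ∫ τ in Set.Ioi ε, g τ) (𝓝[>] a) (𝓝 (∫ τ in Set.Ioi a, g τ)) := by
  have hcover : AECover (volume.restrict (Set.Ioi a)) (𝓝[>] a) fun ε ↦ Set.Ioi ε :=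
    aecover_Ioi_of_Ioi (tendsto_id.mono_left nhdsWithin_le_nhds)
  refine (hcover.integral_tendsto_of_countably_generated hg).congr' ?_
  filter_upwards [self_mem_nhdsWithin] with ε hε
  rw [Measure.restrict_restrict measurableSet_Ioi,
    Set.inter_eq_left.2 (Set.Ioi_subset_Ioi (le_of_lt hε))]

variable {f : ℂ → ℂ} (hf : ∀ z : ℂ, z.im < 0 → DifferentiableAt ℂ f z)
include hf

lemma integral_sub_mul_I_eq_add_sub {ε R : ℝ} (hε : 0 < ε) (hεR : ε ≤ R) :
    ∫ t in (0 : ℝ)..1, f (t - ε * Complex.I) =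
      (∫ t in (0 : ℝ)..1, f (t - R * Complex.I))
        + Complex.I * (∫ τ in ε..R, f (1 - τ * Complex.I))
        - Complex.I * ∫ τ in ε..R, f (-(τ * Complex.I)) := by
  have hdiff : DifferentiableOn ℂ f
      (Set.uIcc (-R * Complex.I : ℂ).re (1 - ε * Complex.I).re ×ℂ
        Set.uIcc (-R * Complex.I : ℂ).im (1 - ε * Complex.I).im) := by
    intro z hz
    refine (hf z ?_).differentiableWithinAt
    have him : z.im ∈ Set.uIcc (-R) (-ε) := by simpa using hz.2
    rw [Set.uIcc_of_le (neg_le_neg hεR)] at him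
    linarith [him.2]
  have hneg (g : ℝ → ℂ) : ∫ y in (-R)..(-ε), g y = ∫ τ in ε..R, g (-τ) := by
    rw [integral_comp_neg]
  have hrect := Complex.integral_boundary_rect_eq_zero_of_differentiableOn f _ _ hdiff
  simp only [neg_mul, Complex.neg_im, Complex.mul_im, Complex.ofReal_re, Complex.I_im, mul_one,
    Complex.ofReal_im, Complex.I_re, mul_zero, add_zero, Complex.ofReal_neg, Complex.neg_re,
    Complex.mul_re, sub_self, neg_zero, Complex.sub_re, Complex.one_re, sub_zero, Complex.sub_im,
    Complex.one_im, zero_sub, Complex.ofReal_one, hneg, smul_eq_mul, Complex.ofReal_zero,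
    zero_add] at hrect
  simp only [← sub_eq_add_neg] at hrect
  linear_combination -hrect

variable {L : ℂ}
  (hright : IntegrableOn (fun τ : ℝ ↦ f (1 - τ * Complex.I)) (Set.Ioi 0))
  (hleft : IntegrableOn (fun τ : ℝ ↦ f (-(τ * Complex.I))) (Set.Ioi 0))
  (hfar : Tendsto (fun r : ℝ ↦ ∫ t in (0 : ℝ)..1, f (t - r * Complex.I)) atTop (𝓝 0))
include hright hleft hfar

lemma integral_sub_mul_I_eq_sub {ε : ℝ} (hε : 0 < ε) :
    ∫ t in (0 : ℝ)..1, f (t - ε * Complex.I) =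
      Complex.I * (∫ τ : ℝ in Set.Ioi ε, f (1 - τ * Complex.I))
        - Complex.I * ∫ τ : ℝ in Set.Ioi ε, f (-(τ * Complex.I)) := by
  have hsub : Set.Ioi ε ⊆ Set.Ioi 0 := Set.Ioi_subset_Ioi hε.le
  have hlim := (hfar.add ((intervalIntegral_tendsto_integral_Ioi ε (hright.mono_set hsub)
    tendsto_id).const_mul Complex.I)).sub
    ((intervalIntegral_tendsto_integral_Ioi ε (hleft.mono_set hsub) tendsto_id).const_mul Complex.I)
  rw [zero_add] at hlim
  refine tendsto_nhds_unique (tendsto_const_nhds.congr' ?_) hlim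
  filter_upwards [eventually_ge_atTop ε] with R hR using integral_sub_mul_I_eq_add_sub hf hε hR

lemma eq_integral_ray_sub_integral_ray
    (hnear : Tendsto (fun r : ℝ ↦ ∫ t in (0 : ℝ)..1, f (t - r * Complex.I)) (𝓝[>] 0) (𝓝 L)) :
    L = Complex.I * (∫ τ : ℝ in Set.Ioi 0, f (1 - τ * Complex.I))
        - Complex.I * ∫ τ : ℝ in Set.Ioi 0, f (-(τ * Complex.I)) := by
  refine tendsto_nhds_unique hnear (Tendsto.congr' ?_
    (((tendsto_integral_Ioi_nhdsGT hright).const_mul Complex.I).sub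
      ((tendsto_integral_Ioi_nhdsGT hleft).const_mul Complex.I)))
  filter_upwards [self_mem_nhdsWithin] with ε hε
  exact (integral_sub_mul_I_eq_sub hf hright hleft hfar hε).symm

end HalfStrip

section HalfStripKummer

variable {u v : ℂ}

lemma intervalIntegrable_rpow_mul_one_sub_rpow {p q : ℝ} (hp : -1 < p) (hq : -1 < q) :
    IntervalIntegrable (fun t : ℝ ↦ t ^ p * (1 - t) ^ q) volume 0 1 := by
  refine (Complex.betaIntegral_convergent (u := p + 1) (v := q + 1) (by simp; linarith)
    (by simp; linarith)).norm.congr_uIoo fun t ht ↦ ?_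
  rw [Set.uIoo_of_le zero_le_one] at ht
  have hsub : (1 - t : ℂ) = (1 - t : ℝ) := by push_cast; ring
  dsimp only
  rw [norm_mul, Complex.norm_cpow_eq_rpow_re_of_pos ht.1, hsub,
    Complex.norm_cpow_eq_rpow_re_of_pos (sub_pos.2 ht.2)]
  simp

lemma differentiableAt_kummerIntegrand {z t : ℂ} (ht : t ∈ Complex.slitPlane)
    (ht' : 1 - t ∈ Complex.slitPlane) : DifferentiableAt ℂ (kummerIntegrand u v z) t :=
  (by fun_prop : DifferentiableAt ℂ (fun t ↦ Complex.exp (-(z * t))) t).mul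
    ((differentiableAt_id.cpow_const ht).mul
      ((differentiableAt_id.const_sub 1).cpow_const ht'))

lemma norm_kummerIntegrand_sub_mul_I_le (u v : ℂ) (x : ℝ) {t r : ℝ} (ht : t ∈ Set.Ioo 0 1)
    (hr : 0 ≤ r) :
    ‖kummerIntegrand u v (Complex.I * x) (t - r * Complex.I)‖ ≤
      exp (-(x * r)) * (exp π * (1 + r)) ^ (‖u - 1‖ + ‖v - 1‖) *
        (t ^ min (u - 1).re 0 * (1 - t) ^ min (v - 1).re 0) := by
  have hexp : ‖Complex.exp (-(Complex.I * x * (t - r * Complex.I)))‖ = exp (-(x * r)) := by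
    simp [Complex.norm_exp]
  have hnorm {s : ℝ} (hs : s ∈ Set.Ioo 0 1) {ε : ℝ} (hε : |ε| = r) :
      s ≤ ‖(s + ε * Complex.I : ℂ)‖ ∧ ‖(s + ε * Complex.I : ℂ)‖ ≤ 1 + r := by
    refine ⟨by simpa using Complex.re_le_norm (s + ε * Complex.I), (norm_add_le _ _).trans ?_⟩
    simpa [hε, abs_of_pos hs.1] using hs.2.le
  have hbase := hnorm ht (ε := -r) (by simpa using hr)
  have hbase' := hnorm (s := 1 - t) ⟨by linarith [ht.2], by linarith [ht.1]⟩ (abs_of_nonneg hr)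
  have hone : 1 ≤ 1 + r := by linarith
  rw [kummerIntegrand, norm_mul, norm_mul, hexp, rpow_add (by positivity)]
  have hpow := norm_cpow_le_rpow_mul_rpow (w := u - 1) ht.1 hbase.1 hbase.2 hone
  have hpow' := norm_cpow_le_rpow_mul_rpow (w := v - 1) (by linarith [ht.2]) hbase'.1 hbase'.2 hone
  rw [show ((t : ℂ) - r * Complex.I) = t + (-r : ℝ) * Complex.I by push_cast; ring,
    show (1 - (t + (-r : ℝ) * Complex.I) : ℂ) = (1 - t : ℝ) + r * Complex.I by push_cast; ring]
  have ht' := ht.1.le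
  calc _ ≤ exp (-(x * r)) * ((t ^ min (u - 1).re 0 * (exp π * (1 + r)) ^ ‖u - 1‖) *
        ((1 - t) ^ min (v - 1).re 0 * (exp π * (1 + r)) ^ ‖v - 1‖)) := by gcongr
    _ = _ := by ring

lemma intervalIntegrable_kummerWeight (hu : 0 < u.re) (hv : 0 < v.re) :
    IntervalIntegrable (fun t : ℝ ↦ t ^ min (u - 1).re 0 * (1 - t) ^ min (v - 1).re 0)
      volume 0 1 :=
  intervalIntegrable_rpow_mul_one_sub_rpow (lt_min (by simpa) (by norm_num))
    (lt_min (by simpa) (by norm_num))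

lemma ae_mem_Ioo_of_mem_uIoc : ∀ᵐ t : ℝ, t ∈ Set.uIoc 0 1 → t ∈ Set.Ioo (0 : ℝ) 1 := by
  filter_upwards [compl_mem_ae_iff.2 (measure_singleton (1 : ℝ))] with t ht₁ ht
  rw [Set.uIoc_of_le zero_le_one] at ht
  exact ⟨ht.1, lt_of_le_of_ne ht.2 ht₁⟩

lemma tendsto_integral_kummerIntegrand_nhdsGT (hu : 0 < u.re) (hv : 0 < v.re) {x : ℝ}
    (hx : 0 ≤ x) :
    Tendsto (fun r : ℝ ↦ ∫ t in (0 : ℝ)..1, kummerIntegrand u v (Complex.I * x) (t - r * Complex.I))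
      (𝓝[>] 0) (𝓝 (kummerIntegral u v (Complex.I * x))) := by
  refine tendsto_integral_filter_of_dominated_convergence
    (fun t ↦ (exp π * 2) ^ (‖u - 1‖ + ‖v - 1‖) *
      (t ^ min (u - 1).re 0 * (1 - t) ^ min (v - 1).re 0))
    (.of_forall fun r ↦ Measurable.aestronglyMeasurable (by unfold kummerIntegrand; fun_prop))
    ?_ ((intervalIntegrable_kummerWeight hu hv).const_mul _) ?_
  · filter_upwards [Ioc_mem_nhdsGT one_pos] with r hr
    filter_upwards [ae_mem_Ioo_of_mem_uIoc] with t ht htI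
    obtain ⟨ht₀, ht₁⟩ := ht htI
    have := sub_pos.2 ht₁
    have hr₀ := hr.1.le
    refine (norm_kummerIntegrand_sub_mul_I_le u v x (ht htI) hr₀).trans ?_
    gcongr
    calc exp (-(x * r)) * (exp π * (1 + r)) ^ (‖u - 1‖ + ‖v - 1‖)
        ≤ 1 * (exp π * (1 + r)) ^ (‖u - 1‖ + ‖v - 1‖) := by
          gcongr
          exact exp_le_one_iff.2 (neg_nonpos.2 (by positivity))
      _ ≤ (exp π * 2) ^ (‖u - 1‖ + ‖v - 1‖) := by
          rw [one_mul]
          gcongr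
          linarith [hr.2]
  · filter_upwards [ae_mem_Ioo_of_mem_uIoc] with t ht htI
    have hcont : ContinuousAt (kummerIntegrand u v (Complex.I * x)) t :=
      (differentiableAt_kummerIntegrand (.inl (by simpa using (ht htI).1))
        (.inl (by simpa using (ht htI).2))).continuousAt
    have hpath : Tendsto (fun r : ℝ ↦ (t : ℂ) - r * Complex.I) (𝓝[>] 0) (𝓝 t) := by
      have : Continuous fun r : ℝ ↦ (t : ℂ) - r * Complex.I := by fun_prop
      simpa using this.continuousAt.tendsto.mono_left (nhdsWithin_le_nhds (a := 0))
    exact hcont.tendsto.comp hpath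

lemma tendsto_integral_kummerIntegrand_atTop (hu : 0 < u.re) (hv : 0 < v.re) {x : ℝ}
    (hx : 0 < x) :
    Tendsto (fun r : ℝ ↦ ∫ t in (0 : ℝ)..1, kummerIntegrand u v (Complex.I * x) (t - r * Complex.I))
      atTop (𝓝 0) := by
  set N := ‖u - 1‖ + ‖v - 1‖
  set B := ∫ t in (0 : ℝ)..1, t ^ min (u - 1).re 0 * (1 - t) ^ min (v - 1).re 0
  have hdecay : Tendsto (fun r : ℝ ↦ exp (-(x * r)) * (exp π * (1 + r)) ^ N * B) atTop (𝓝 0) := by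
    have hshift : Tendsto (fun r : ℝ ↦ 1 + r) atTop atTop :=
      tendsto_atTop_add_const_left _ _ tendsto_id
    have hlim := ((tendsto_rpow_mul_exp_neg_mul_atTop_nhds_zero N x hx).comp hshift).const_mul
      (exp x * exp π ^ N * B)
    rw [mul_zero] at hlim
    refine hlim.congr' ?_
    filter_upwards [eventually_ge_atTop 0] with r hr
    have hexp : exp x * exp (-x * (1 + r)) = exp (-(x * r)) := by rw [← exp_add]; ring_nf
    rw [mul_rpow (exp_pos π).le (by positivity), ← hexp, Function.comp_apply]
    ring
  refine squeeze_zero_norm' ?_ hdecay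
  filter_upwards [eventually_ge_atTop 0] with r hr
  rw [← intervalIntegral.integral_const_mul]
  refine norm_integral_le_of_norm_le zero_le_one ?_
    ((intervalIntegrable_kummerWeight hu hv).const_mul _)
  filter_upwards [ae_mem_Ioo_of_mem_uIoc] with t ht htI
  exact norm_kummerIntegrand_sub_mul_I_le u v x (ht (by rwa [Set.uIoc_of_le zero_le_one])) hr

lemma kummerIntegral_inv_eq_of_im_neg (hu : 0 < u.re) (hv : 0 < v.re) {c : ℂ}
    (hre : c.re = 0) (him : c.im < 0) :
    kummerIntegral u v c⁻¹ = c ^ u * rayIntegral u v c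
      + Complex.exp (-c⁻¹) * ((-c) ^ v * rayIntegral v u (-c)) := by
  have hc₀ : c ≠ 0 := fun h ↦ by simp [h] at him
  obtain ⟨x, hx, hz⟩ : ∃ x : ℝ, 0 < x ∧ c⁻¹ = Complex.I * x :=
    ⟨-c.im⁻¹, by simpa using him, by rw [← Complex.re_add_im c, hre]; simp [mul_comm]⟩
  have hray : (x : ℂ) * c = -Complex.I := by
    linear_combination Complex.I * c * hz + x * c * Complex.I_sq - Complex.I * inv_mul_cancel₀ hc₀
  have hleft := mul_integral_kummerIntegrand_ray (u := u) (v := v) hc₀ hx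
  have hright := mul_integral_kummerIntegrand_ray (u := v) (v := u) (neg_ne_zero.2 hc₀) hx
  have hleftInt := integrableOn_kummerIntegrand_ray (v := v) hu hre.le hc₀ hx
  have hrightInt := integrableOn_kummerIntegrand_ray (v := u) hv (c := -c) (by simp [hre])
    (neg_ne_zero.2 hc₀) hx
  simp only [mul_neg, hray, neg_neg, inv_neg, neg_mul, mul_comm Complex.I (Complex.ofReal _)]
    at hleft hright hleftInt hrightInt
  have hedge (τ : ℝ) : kummerIntegrand u v c⁻¹ (1 - τ * Complex.I) =
      Complex.exp (-c⁻¹) * kummerIntegrand v u (-c⁻¹) (τ * Complex.I) := kummerIntegrand_one_sub _ _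
  have hcontour := eq_integral_ray_sub_integral_ray (f := kummerIntegrand u v c⁻¹)
    (fun z hz ↦ differentiableAt_kummerIntegrand (.inr hz.ne) (.inr (by simpa using hz.ne)))
    (by simp only [hedge]; exact hrightInt.const_mul _) hleftInt
    (hz ▸ tendsto_integral_kummerIntegrand_atTop hu hv hx)
    (hz ▸ tendsto_integral_kummerIntegrand_nhdsGT hu hv hx.le)
  simp only [hedge, MeasureTheory.integral_const_mul] at hcontour
  rw [hcontour, ← hleft, ← hright, hz]
  ring

theorem kummerIntegral_inv_eq_rayIntegral_add (hu : 0 < u.re) (hv : 0 < v.re) {c : ℂ}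
    (hre : c.re = 0) (hc : c ≠ 0) :
    kummerIntegral u v c⁻¹ = c ^ u * rayIntegral u v c
      + Complex.exp (-c⁻¹) * ((-c) ^ v * rayIntegral v u (-c)) := by
  rcases lt_or_gt_of_ne (show c.im ≠ 0 from fun him ↦ hc (Complex.ext hre him)) with him | him
  · exact kummerIntegral_inv_eq_of_im_neg hu hv hre him
  · have hreflect := kummerIntegral_inv_eq_of_im_neg hv hu (c := -c) (by simpa) (by simpa)
    rw [inv_neg, neg_neg, neg_neg] at hreflect
    rw [kummerIntegral_reflect, hreflect, mul_add, ← mul_assoc (Complex.exp (-c⁻¹)) (Complex.exp _),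
      ← Complex.exp_add, neg_add_cancel, Complex.exp_zero]
    ring

end HalfStripKummer

section KummerAsymptotics

variable {u v κ : ℂ}

lemma ofReal_cpow_mul_inv_mul_cpow (hκ : κ ≠ 0) {x : ℝ} (hx : 0 < x) (w : ℂ) :
    (x : ℂ) ^ w * ((κ * x)⁻¹) ^ w = κ⁻¹ ^ w := by
  have hinv : (κ * x)⁻¹ = (x⁻¹ : ℝ) * κ⁻¹ := by push_cast; rw [mul_inv, mul_comm]
  rw [hinv, ofReal_mul_cpow (inv_pos.2 hx) (inv_ne_zero hκ), ← mul_assoc,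
    ← Complex.mul_cpow_ofReal_nonneg hx.le (inv_pos.2 hx).le, ← Complex.ofReal_mul,
    mul_inv_cancel₀ hx.ne', Complex.ofReal_one, Complex.one_cpow, one_mul]

lemma ofReal_cpow_mul_kummerIntegral (hu : 0 < u.re) (hv : 0 < v.re) (hre : κ.re = 0)
    (hκ : κ ≠ 0) {x : ℝ} (hx : 0 < x) :
    (x : ℂ) ^ u * kummerIntegral u v (κ * x) = κ⁻¹ ^ u * rayIntegral u v (κ * x)⁻¹
      + (x : ℂ) ^ (u - v) *
        (Complex.exp (-(κ * x)) * ((-κ)⁻¹ ^ v * rayIntegral v u (-(κ * x)⁻¹))) := by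
  have hx' : (x : ℂ) ≠ 0 := Complex.ofReal_ne_zero.2 hx.ne'
  have hc : -(κ * x)⁻¹ = (-κ * x)⁻¹ := by rw [neg_mul, inv_neg]
  have hformula := kummerIntegral_inv_eq_rayIntegral_add hu hv (c := (κ * x)⁻¹) (by simp [hre])
    (inv_ne_zero (mul_ne_zero hκ hx'))
  rw [inv_inv, hc] at hformula
  rw [hformula, hc, ← ofReal_cpow_mul_inv_mul_cpow hκ hx,
    ← ofReal_cpow_mul_inv_mul_cpow (neg_ne_zero.2 hκ) hx, Complex.cpow_sub _ _ hx']
  have hxv : (x : ℂ) ^ v ≠ 0 := by simp [Complex.cpow_eq_zero_iff, hx.ne']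
  field_simp

lemma tendsto_inv_mul_ofReal (hre : κ.re = 0) :
    Tendsto (fun x : ℝ ↦ (κ * x)⁻¹) atTop (𝓝[{c | c.re ≤ 0}] 0) := by
  refine tendsto_nhdsWithin_iff.2 ⟨?_, .of_forall fun x ↦ by simp [hre]⟩
  have hlim := (Complex.continuous_ofReal.tendsto 0).comp tendsto_inv_atTop_zero
  simpa [Function.comp_def, mul_comm] using hlim.mul_const κ⁻¹

lemma tendsto_ofReal_cpow_mul_kummerIntegral (hu : 0 < u.re) (huv : u.re < v.re)
    (hre : κ.re = 0) (hκ : κ ≠ 0) :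
    Tendsto (fun x : ℝ ↦ (x : ℂ) ^ u * kummerIntegral u v (κ * x)) atTop
      (𝓝 (κ⁻¹ ^ u * Complex.Gamma u)) := by
  have hv := hu.trans huv
  have hfst := ((tendsto_rayIntegral_zero (v := v) hu).comp
    (tendsto_inv_mul_ofReal hre)).const_mul (κ⁻¹ ^ u)
  have hsnd : Tendsto (fun x : ℝ ↦ (x : ℂ) ^ (u - v) * (Complex.exp (-(κ * x)) *
      ((-κ)⁻¹ ^ v * rayIntegral v u (-(κ * x)⁻¹)))) atTop (𝓝 0) := by
    have hpow := tendsto_rpow_neg_atTop (sub_pos.2 huv)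
    have hray := (tendsto_rayIntegral_zero (v := u) hv).comp
      (tendsto_inv_mul_ofReal (κ := -κ) (by simpa))
    rw [tendsto_zero_iff_norm_tendsto_zero]
    have hlim := hpow.mul (hray.const_mul ((-κ)⁻¹ ^ v)).norm
    rw [zero_mul] at hlim
    refine hlim.congr' ?_
    filter_upwards [eventually_gt_atTop 0] with x hx
    have hexp : ‖Complex.exp (-(κ * x))‖ = 1 := by simp [Complex.norm_exp, hre]
    rw [norm_mul ((x : ℂ) ^ (u - v)), norm_mul (Complex.exp _), hexp, one_mul,
      Complex.norm_cpow_eq_rpow_re_of_pos hx, Complex.sub_re, neg_sub, Function.comp_apply,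
      neg_mul, inv_neg (a := κ * (x : ℂ))]
  have hlim := hfst.add hsnd
  rw [add_zero] at hlim
  refine hlim.congr' ?_
  filter_upwards [eventually_gt_atTop 0] with x hx
  exact (ofReal_cpow_mul_kummerIntegral hu hv hre hκ hx).symm

lemma norm_cpow_le_of_norm_eq_one {z w : ℂ} {R : ℝ} (hz : ‖z‖ = 1) (hw : ‖w‖ ≤ R) :
    ‖z ^ w‖ ≤ exp π ^ R := by
  have hle := norm_cpow_le_rpow_mul_rpow (w := w) one_pos hz.ge hz.le le_rfl
  rw [one_rpow, one_mul, mul_one] at hle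
  exact hle.trans (rpow_le_rpow_of_exponent_le (one_le_exp pi_pos.le) hw)

lemma exists_norm_ofReal_cpow_mul_kummerIntegral_le (hre : κ.re = 0) (hκ : ‖κ‖ = 1) {δ R : ℝ}
    (hδ : 0 < δ) (hR : 1 ≤ R) :
    ∃ C, ∀ u v : ℂ, δ ≤ u.re → u.re ≤ v.re → ‖u‖ ≤ R → ‖v‖ ≤ R → ∀ x : ℝ, 1 ≤ x →
      ‖(x : ℂ) ^ u * kummerIntegral u v (κ * x)‖ ≤ C := by
  obtain ⟨C, hC⟩ := exists_norm_rayIntegral_le hδ (zero_le_one.trans hR)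
  refine ⟨exp π ^ R * C + exp π ^ R * C, fun u v hδu huv hu hv x hx ↦ ?_⟩
  have hx₀ := one_pos.trans_le hx
  have hc : ‖(κ * x)⁻¹‖ ≤ R := by
    rw [norm_inv, norm_mul, hκ, one_mul, Complex.norm_of_nonneg hx₀.le]
    exact (inv_le_one_of_one_le₀ hx).trans hR
  have hfst := hC u v (κ * x)⁻¹ hδu hu hv (by simp [hre]) hc
  have hsnd := hC v u (-(κ * x)⁻¹) (hδu.trans huv) hv hu (by simp [hre]) (by rwa [norm_neg])
  have hpow : ‖(x : ℂ) ^ (u - v)‖ ≤ 1 := by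
    rw [Complex.norm_cpow_eq_rpow_re_of_pos hx₀]
    exact rpow_le_one_of_one_le_of_nonpos hx (by simpa using huv)
  have hexp : ‖Complex.exp (-(κ * x))‖ = 1 := by simp [Complex.norm_exp, hre]
  have hκu := norm_cpow_le_of_norm_eq_one (z := κ⁻¹) (by simp [hκ]) hu
  have hκv := norm_cpow_le_of_norm_eq_one (z := (-κ)⁻¹) (by simp [hκ]) hv
  rw [ofReal_cpow_mul_kummerIntegral (hδ.trans_le hδu) (hδ.trans_le (hδu.trans huv)) hre
    (norm_ne_zero_iff.1 (hκ ▸ one_ne_zero)) hx₀]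
  refine (norm_add_le _ _).trans (add_le_add ?_ ?_)
  · rw [norm_mul]
    gcongr
  · rw [norm_mul, norm_mul (Complex.exp _), hexp, one_mul, norm_mul]
    refine (mul_le_of_le_one_left (by positivity) hpow).trans ?_
    gcongr

end KummerAsymptotics

section LandauZenerLimit

variable {w : ℂ}

lemma Gamma_half_sub_mul_Gamma_half_add_mul_cos (hw : |w.re| < 1 / 2) :
    Complex.Gamma (1 / 2 - w) * Complex.Gamma (1 / 2 + w) * Complex.cos (π * w) = π := by
  have hw' := abs_lt.1 hw
  have hreflection := Complex.Gamma_mul_Gamma_one_sub (1 / 2 + w)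
  have hcos : Complex.sin (π * (1 / 2 + w)) = Complex.cos (π * w) := by
    rw [← Complex.sin_add_pi_div_two]
    ring_nf
  rw [hcos, show (1 : ℂ) - (1 / 2 + w) = 1 / 2 - w by ring, mul_comm] at hreflection
  have hsub : Complex.Gamma (1 / 2 - w) ≠ 0 := Complex.Gamma_ne_zero_of_re_pos (by simp; linarith)
  have hadd : Complex.Gamma (1 / 2 + w) ≠ 0 := Complex.Gamma_ne_zero_of_re_pos (by simp; linarith)
  have hne : Complex.cos (π * w) ≠ 0 := fun h ↦
    mul_ne_zero hsub hadd (by rw [hreflection, h, div_zero])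
  rw [hreflection, div_mul_cancel₀ _ hne]

lemma Gamma_one_add_mul_Gamma_one_sub_mul_sin (hw : |w.re| < 1) :
    Complex.Gamma (1 + w) * Complex.Gamma (1 - w) * Complex.sin (π * w) = π * w := by
  rcases eq_or_ne w 0 with rfl | hw₀
  · simp
  have hw' := abs_lt.1 hw
  have hreflection : Complex.Gamma (1 + w) * Complex.Gamma (1 - w) =
      w * (π / Complex.sin (π * w)) := by
    rw [add_comm, Complex.Gamma_add_one w hw₀, mul_assoc, Complex.Gamma_mul_Gamma_one_sub]
  have hadd : Complex.Gamma (1 + w) ≠ 0 := Complex.Gamma_ne_zero_of_re_pos (by simp; linarith)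
  have hsub : Complex.Gamma (1 - w) ≠ 0 := Complex.Gamma_ne_zero_of_re_pos (by simp; linarith)
  have hne : Complex.sin (π * w) ≠ 0 := fun h ↦
    mul_ne_zero hadd hsub (by rw [hreflection, h, div_zero, mul_zero])
  rw [hreflection, mul_assoc, div_mul_cancel₀ _ hne, mul_comm]

lemma Gamma_three_halves_sq : Complex.Gamma (3 / 2) ^ 2 = π / 4 := by
  have hhalf := Complex.Gamma_one_half_eq
  have hsqrt : ((π : ℂ) ^ (1 / 2 : ℂ)) ^ 2 = π := by
    rw [← Complex.cpow_nat_mul]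
    norm_num
  rw [show (3 / 2 : ℂ) = 1 / 2 + 1 by norm_num, Complex.Gamma_add_one _ (by norm_num), hhalf,
    mul_pow, hsqrt]
  ring

lemma betaIntegral_mul_betaIntegral_mul_sin (hw : |w.re| < 1 / 2) :
    Complex.betaIntegral (1 / 2 - w) (1 + w) * Complex.betaIntegral (1 / 2 + w) (1 - w) *
      Complex.sin (2 * (π * w)) = 8 * π * w := by
  have hw' := abs_lt.1 hw
  have hbeta := Complex.Gamma_mul_Gamma_eq_betaIntegral (s := 1 / 2 - w) (t := 1 + w)
    (by simp; linarith) (by simp; linarith)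
  have hbeta' := Complex.Gamma_mul_Gamma_eq_betaIntegral (s := 1 / 2 + w) (t := 1 - w)
    (by simp; linarith) (by simp; linarith)
  rw [show 1 / 2 - w + (1 + w) = 3 / 2 by ring] at hbeta
  rw [show 1 / 2 + w + (1 - w) = 3 / 2 by ring] at hbeta'
  have hcos := Gamma_half_sub_mul_Gamma_half_add_mul_cos hw
  have hsin := Gamma_one_add_mul_Gamma_one_sub_mul_sin (hw.trans (by norm_num))
  have hΓ : Complex.Gamma (3 / 2) ^ 2 ≠ 0 := by
    simp [Gamma_three_halves_sq, pi_ne_zero]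
  refine mul_left_cancel₀ hΓ ?_
  calc _ = 2 * (Complex.Gamma (3 / 2) * Complex.betaIntegral (1 / 2 - w) (1 + w)) *
        (Complex.Gamma (3 / 2) * Complex.betaIntegral (1 / 2 + w) (1 - w)) *
        (Complex.sin (π * w) * Complex.cos (π * w)) := by rw [Complex.sin_two_mul]; ring
    _ = 2 * (Complex.Gamma (1 / 2 - w) * Complex.Gamma (1 / 2 + w) * Complex.cos (π * w)) *
        (Complex.Gamma (1 + w) * Complex.Gamma (1 - w) * Complex.sin (π * w)) := by
      rw [← hbeta, ← hbeta']; ring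
    _ = _ := by rw [hcos, hsin, Gamma_three_halves_sq]; ring

/-- The amplitude product `2 λ b b'` at time `T` of the two linearly chirped two-level systems
with `λ = -4 i w`; the population inversion over `[-T, T]` is `2 (1 - P) ^ 2 - 1`. -/
noncomputable def transitionProduct (w : ℂ) (T : ℝ) : ℂ :=
  2 * (-4 * Complex.I * w) *
    (chirpSnd Complex.I (1 / 2 - w) (1 + w) T * chirpSnd (-Complex.I) (1 / 2 + w) (1 - w) T)

lemma hasSum_nestedCosIntegral (hw : |w.re| < 1 / 2) {T : ℝ} (hT : 0 ≤ T) :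
    HasSum (fun n ↦ (16 * Complex.I) ^ n * nestedCosIntegral T n T * w ^ n)
      (2 * (1 - transitionProduct w T) ^ 2 - 1) := by
  have hw' := abs_lt.1 hw
  have hu : 0 < (1 / 2 - w).re := by simp; linarith
  have hv : 0 < (1 + w).re := by simp; linarith
  have hu' : 0 < (1 / 2 + w).re := by simp; linarith
  have hv' : 0 < (1 - w).re := by simp; linarith
  have hsys := isTwoLevelSolution_chirp (κ := Complex.I) hu hv (by ring)
  have hsys' := isTwoLevelSolution_chirp (κ := -Complex.I) hu' hv' (by ring)
  rw [show 4 * Complex.I * (1 / 2 - w - 1 / 2) = -4 * Complex.I * w by ring] at hsys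
  rw [show 4 * -Complex.I * (1 / 2 + w - 1 / 2) = -4 * Complex.I * w by ring, neg_neg] at hsys'
  refine (hsys.hasSum_integratedVolterra_of_parity continuous_chirp continuous_chirp
    cosKernel_eq_chirp hsys' (chirpFst_zero hu hv) (chirpFst_zero hu' hv') even_chirpFst
    odd_chirpSnd even_chirpFst odd_chirpSnd hT).congr_fun fun n ↦ ?_
  rw [integratedVolterra_cosKernel_pow_one,
    show -(4 * (-4 * Complex.I * w)) = 16 * Complex.I * w by ring, mul_pow _ w, mul_right_comm]

lemma transitionProduct_eq (hw : |w.re| < 1 / 2) {T : ℝ} (hT : T ≠ 0) :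
    transitionProduct w T = -(Complex.I / π) * Complex.sin (2 * (π * w)) *
      (((T ^ 2 : ℝ) : ℂ) ^ (1 / 2 - w) *
          kummerIntegral (1 / 2 - w) (1 + w) (Complex.I * (T ^ 2 : ℝ)) *
        (((T ^ 2 : ℝ) : ℂ) ^ (1 / 2 + w) *
          kummerIntegral (1 / 2 + w) (1 - w) (-Complex.I * (T ^ 2 : ℝ)))) := by
  have hw' := abs_lt.1 hw
  have hβ := betaIntegral_ne_zero (u := 1 / 2 - w) (v := 1 + w)
    (by simp; linarith) (by simp; linarith)
  have hβ' := betaIntegral_ne_zero (u := 1 / 2 + w) (v := 1 - w)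
    (by simp; linarith) (by simp; linarith)
  have hsin := betaIntegral_mul_betaIntegral_mul_sin hw
  have hpow : ((T ^ 2 : ℝ) : ℂ) ^ (1 / 2 - w) * ((T ^ 2 : ℝ) : ℂ) ^ (1 / 2 + w) = T ^ 2 := by
    rw [← Complex.cpow_add _ _ (Complex.ofReal_ne_zero.2 (pow_ne_zero 2 hT)),
      show 1 / 2 - w + (1 / 2 + w) = 1 by ring, Complex.cpow_one, Complex.ofReal_pow]
  have hπ : (π : ℂ) ≠ 0 := Complex.ofReal_ne_zero.2 pi_ne_zero
  rw [mul_mul_mul_comm (_ ^ (1 / 2 - w)), hpow, transitionProduct, chirpSnd, chirpSnd]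
  push_cast
  generalize Complex.betaIntegral (1 / 2 - w) (1 + w) = β at *
  generalize Complex.betaIntegral (1 / 2 + w) (1 - w) = β' at *
  generalize kummerIntegral (1 / 2 - w) _ _ = K
  generalize kummerIntegral (1 / 2 + w) _ _ = K'
  generalize Complex.sin _ = S at *
  field_simp
  linear_combination (T : ℂ) ^ 2 * K * K' * hsin

lemma neg_I_cpow_mul_I_cpow :
    (-Complex.I) ^ (1 / 2 - w) * Complex.I ^ (1 / 2 + w) = Complex.exp (π * w * Complex.I) := by
  rw [Complex.cpow_def_of_ne_zero (by simp), Complex.cpow_def_of_ne_zero (by simp),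
    Complex.log_I, Complex.log_neg_I, ← Complex.exp_add]
  ring_nf

lemma two_mul_I_mul_sin_mul_exp (z : ℂ) :
    2 * Complex.I * Complex.sin z * Complex.exp (z * Complex.I) =
      Complex.exp (2 * z * Complex.I) - 1 := by
  rw [mul_assoc 2 z, two_mul (z * Complex.I), Complex.exp_add, Complex.sin, neg_mul,
    Complex.exp_neg]
  have hne := Complex.exp_ne_zero (z * Complex.I)
  generalize Complex.exp (z * Complex.I) = E at *
  field_simp
  linear_combination (1 - E ^ 2) * Complex.I_sq

lemma tendsto_transitionProduct (hw : |w.re| < 1 / 4) :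
    Tendsto (transitionProduct w) atTop (𝓝 (1 - Complex.exp (2 * (π * w) * Complex.I))) := by
  have hw' := abs_lt.1 hw
  have hhalf : |w.re| < 1 / 2 := hw.trans (by norm_num)
  have hfst := tendsto_ofReal_cpow_mul_kummerIntegral (u := 1 / 2 - w) (v := 1 + w)
    (κ := Complex.I) (by simp; linarith) (by simp; linarith) (by simp) (by simp)
  have hsnd := tendsto_ofReal_cpow_mul_kummerIntegral (u := 1 / 2 + w) (v := 1 - w)
    (κ := -Complex.I) (by simp; linarith) (by simp; linarith) (by simp) (by simp)
  have hsq : Tendsto (fun T : ℝ ↦ T ^ 2) atTop atTop := tendsto_pow_atTop two_ne_zero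
  have hlim := ((hfst.mul hsnd).comp hsq).const_mul (-(Complex.I / π) * Complex.sin (2 * (π * w)))
  have hvalue : -(Complex.I / π) * Complex.sin (2 * (π * w)) *
      (Complex.I⁻¹ ^ (1 / 2 - w) * Complex.Gamma (1 / 2 - w) *
        ((-Complex.I)⁻¹ ^ (1 / 2 + w) * Complex.Gamma (1 / 2 + w))) =
      1 - Complex.exp (2 * (π * w) * Complex.I) := by
    have hπ : (π : ℂ) ≠ 0 := Complex.ofReal_ne_zero.2 pi_ne_zero
    have hcos := Gamma_half_sub_mul_Gamma_half_add_mul_cos hhalf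
    rw [inv_neg, Complex.inv_I, neg_neg, mul_mul_mul_comm (_ ^ (1 / 2 - w)),
      neg_I_cpow_mul_I_cpow, Complex.sin_two_mul]
    calc _ = -(2 * Complex.I * Complex.sin (π * w) * Complex.exp (π * w * Complex.I)) / π *
          (Complex.Gamma (1 / 2 - w) * Complex.Gamma (1 / 2 + w) * Complex.cos (π * w)) := by ring
      _ = _ := by rw [hcos, two_mul_I_mul_sin_mul_exp, div_mul_cancel₀ _ hπ, neg_sub]
  rw [hvalue] at hlim
  refine hlim.congr' ?_
  filter_upwards [eventually_ne_atTop 0] with T hT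
  exact (transitionProduct_eq hhalf hT).symm

lemma exists_norm_transitionProduct_le {r : ℝ} (hr : r < 1 / 4) :
    ∃ C, ∀ w : ℂ, ‖w‖ ≤ r → ∀ T : ℝ, 1 ≤ T → ‖transitionProduct w T‖ ≤ C := by
  have hδ : 0 < 1 / 2 - r := by linarith
  obtain ⟨C, hC⟩ := exists_norm_ofReal_cpow_mul_kummerIntegral_le (κ := Complex.I) (by simp)
    (by simp) hδ one_le_two
  obtain ⟨C', hC'⟩ := exists_norm_ofReal_cpow_mul_kummerIntegral_le (κ := -Complex.I) (by simp)
    (by simp) hδ one_le_two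
  obtain ⟨S, hS⟩ := (isCompact_closedBall (0 : ℂ) r).exists_bound_of_continuousOn
    (f := fun w ↦ -(Complex.I / π) * Complex.sin (2 * (π * w))) (by fun_prop)
  refine ⟨S * (C * C'), fun w hw T hT ↦ ?_⟩
  have hre := abs_le.1 ((Complex.abs_re_le_norm w).trans hw)
  have hnorm {a : ℂ} (ha : ‖a‖ ≤ 1) : ‖a + w‖ ≤ 2 ∧ ‖a - w‖ ≤ 2 :=
    ⟨(norm_add_le _ _).trans (by linarith), (norm_sub_le _ _).trans (by linarith)⟩
  have hhalf := hnorm (a := 1 / 2) (by norm_num)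
  have hone := hnorm (a := 1) (by simp)
  have hfst := hC (1 / 2 - w) (1 + w) (by simp; linarith) (by simp; linarith) hhalf.2 hone.1
    (T ^ 2) (one_le_pow₀ hT)
  have hsnd := hC' (1 / 2 + w) (1 - w) (by simp; linarith) (by simp; linarith) hhalf.1 hone.2
    (T ^ 2) (one_le_pow₀ hT)
  have hsin := hS w (mem_closedBall_zero_iff.2 hw)
  rw [transitionProduct_eq (abs_lt.2 ⟨by linarith, by linarith⟩) (one_pos.trans_le hT).ne',
    norm_mul, norm_mul (_ * kummerIntegral _ _ _)]
  exact mul_le_mul hsin (mul_le_mul hfst hsnd (norm_nonneg _) ((norm_nonneg _).trans hfst))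
    (by positivity) ((norm_nonneg _).trans hsin)

lemma hasSum_two_mul_exp_sub_one (a z : ℂ) :
    HasSum (fun n ↦ (2 * (a ^ n / n.factorial) - if n = 0 then 1 else 0) * z ^ n)
      (2 * Complex.exp (a * z) - 1) := by
  have hexp : HasSum (fun n ↦ (a * z) ^ n / n.factorial) (Complex.exp (a * z)) := by
    rw [Complex.exp_eq_exp_ℂ]
    exact NormedSpace.expSeries_div_hasSum_exp _
  refine ((hexp.mul_left 2).sub (hasSum_ite_eq 0 1)).congr_fun fun n ↦ ?_
  rw [mul_pow]
  split_ifs with hn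
  · simp [hn]
  · ring

theorem I3_eq_pi_cubed_div_192_general {n : ℕ} (hn : n ≠ 0) :
    Tendsto (fun T ↦ nestedCosIntegral T n T) atTop (𝓝 (2 / n.factorial * (π / 4) ^ n)) := by
  have hre {z : ℂ} (hz : z ∈ Metric.sphere (0 : ℂ) (1 / 8)) : |z.re| < 1 / 4 :=
    ((Complex.abs_re_le_norm z).trans (mem_sphere_zero_iff_norm.1 hz).le).trans_lt (by norm_num)
  obtain ⟨C, hC⟩ := exists_norm_transitionProduct_le (r := 1 / 8) (by norm_num)
  have hcoeff := tendsto_coeff_of_hasSum_of_tendsto_of_bounded (R := 1 / 8) (l := atTop)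
    (c := fun T n ↦ (16 * Complex.I) ^ n * nestedCosIntegral T n T)
    (F := fun T w ↦ 2 * (1 - transitionProduct w T) ^ 2 - 1) (B := 2 * (1 + C) ^ 2 + 1)
    (by norm_num) ?_ ?_ (fun z _ ↦ hasSum_two_mul_exp_sub_one (4 * π * Complex.I) z)
    (fun z hz ↦ ?_) n
  · have hI : (16 * Complex.I) ^ n ≠ 0 := by simp
    refine tendsto_ofReal_iff.1 ?_
    convert hcoeff.div_const ((16 * Complex.I) ^ n) using 2 with T
    · field_simp
    · simp only [if_neg hn]
      push_cast
      rw [show 4 * π * Complex.I = π / 4 * (16 * Complex.I) by ring, mul_pow]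
      field_simp
      ring
  · filter_upwards [eventually_ge_atTop 0] with T hT z hz
    exact hasSum_nestedCosIntegral ((hre hz).trans (by norm_num)) hT
  · filter_upwards [eventually_ge_atTop 1] with T hT z hz
    have hP := hC z (mem_sphere_zero_iff_norm.1 hz).le T hT
    refine (norm_sub_le _ _).trans ?_
    rw [norm_one, norm_mul, norm_pow, RCLike.norm_ofNat]
    gcongr
    refine (norm_sub_le _ _).trans ?_
    rw [norm_one]
    gcongr
  · convert ((((tendsto_transitionProduct (hre hz)).const_sub 1).pow 2).const_mul 2).sub_const 1
      using 4
    rw [sub_sub_cancel, ← Complex.exp_nat_mul]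
    push_cast
    ring_nf

end LandauZenerLimit

/-- The iterated improper integral
`I₃ = ∫_{-∞}^{∞} ds₁ ∫_{-∞}^{s₁} ds₂ ⋯ ∫_{-∞}^{s₅} ds₆
      cos(s₁² − s₂²)·cos(s₃² − s₄²)·cos(s₅² − s₆²)`,
understood as the limit as `T → ∞` of the integral over the simplex
`{(s₁,…,s₆) : −T ≤ s₆ ≤ s₅ ≤ ⋯ ≤ s₂ ≤ s₁ ≤ T}`, converges and equals
`(2/3!)·(π/4)³ = π³/192`. -/
theorem I3_eq_pi_cubed_div_192 :
    Tendsto (fun T : ℝ =>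
        ∫ s₁ in (-T)..T, ∫ s₂ in (-T)..s₁, ∫ s₃ in (-T)..s₂, ∫ s₄ in (-T)..s₃,
          ∫ s₅ in (-T)..s₄, ∫ s₆ in (-T)..s₅,
          Real.cos (s₁ ^ 2 - s₂ ^ 2) * Real.cos (s₃ ^ 2 - s₄ ^ 2) *
            Real.cos (s₅ ^ 2 - s₆ ^ 2))
      atTop (𝓝 (π ^ 3 / 192)) := by
  have hthree := I3_eq_pi_cubed_div_192_general (n := 3) (by norm_num)
  have hlimit : 2 / (3 : ℕ).factorial * (π / 4) ^ 3 = π ^ 3 / 192 := by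
    norm_num [Nat.factorial]
    ring
  simpa only [hlimit, nestedCosIntegral, ← intervalIntegral.integral_const_mul, mul_one,
    mul_assoc] using hthree
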